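/- Let G be a simple graph on [n] with no isolated vertex whose edge ideal I = I(G) has almost maximal finite index t. Then n = t + 4 or n = t + 5. -/

import Mathlib

open Finsupp

namespace EP

variable (K : Type) [Field K]

/-! ## Simplicial chains over a linearly ordered vertex set -/

variable {V : Type} [Fintype V] [DecidableEq V] [LinearOrder V]

/-- Boundary of a single (oriented) face, given as a finset. -/
noncomputable def bdFace (s : Finset V) : Finset V →₀ K :=
  ∑ v ∈ s, ((-1 : K) ^ ((s.filter (fun w => w < v)).card)) • Finsupp.single (s.erase v) 1

/-- The simplicial boundary map on the free module on all finsets of vertices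
(the augmented oriented chain complex, with the empty set playing the role of
the `(-1)`-dimensional face). -/
noncomputable def bdS : (Finset V →₀ K) →ₗ[K] (Finset V →₀ K) :=
  Finsupp.lsum K fun s => LinearMap.toSpanSingleton K (Finset V →₀ K) (bdFace K s)

/-- Chains supported on faces of a complex `Δ` having `k` vertices. -/
noncomputable def faceSpan (Δ : Set (Finset V)) (k : ℕ) : Submodule K (Finset V →₀ K) :=
  Submodule.span K {c | ∃ F ∈ Δ, F.card = k ∧ c = Finsupp.single F 1}

/-- Dimension of the `d`-th reduced simplicial homology of `Δ` over `K`. -/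
noncomputable def redHomRank (Δ : Set (Finset V)) (d : ℕ) : ℕ :=
  Module.finrank K ↥(faceSpan K Δ (d+1) ⊓ LinearMap.ker (bdS K)) -
    Module.finrank K
      ↥(Submodule.map (bdS K) (faceSpan K Δ (d+2)) ⊓
          (faceSpan K Δ (d+1) ⊓ LinearMap.ker (bdS K)))

/-- The flag complex of a graph: faces are the cliques. -/
def flagComplex (G : SimpleGraph V) : Set (Finset V) :=
  {F | ∀ i ∈ F, ∀ j ∈ F, i ≠ j → G.Adj i j}

/-- The flag complex of the induced subgraph of `G` on `W`. -/
def flagComplexOn (G : SimpleGraph V) (W : Finset V) : Set (Finset V) :=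
  {F | (F : Set V) ⊆ (W : Set V) ∧ ∀ i ∈ F, ∀ j ∈ F, i ≠ j → G.Adj i j}

/-- The induced subcomplex of `Δ` on a vertex subset `W`. -/
def restrictComplex (Δ : Set (Finset V)) (W : Finset V) : Set (Finset V) :=
  {F | F ∈ Δ ∧ F ⊆ W}

/-- The oriented `1`-chain `[a,b]` (so `[a,b] = -[b,a]`). -/
noncomputable def edgeChain (a b : V) : Finset V →₀ K :=
  if a < b then Finsupp.single {a, b} 1 else -Finsupp.single {a, b} 1

/-- The oriented `2`-chain `[x,y,z]`, antisymmetric under transpositions. -/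
noncomputable def triChain (x y z : V) : Finset V →₀ K :=
  if (x < y ∧ y < z) ∨ (y < z ∧ z < x) ∨ (z < x ∧ x < y)
  then Finsupp.single {x, y, z} 1
  else -Finsupp.single {x, y, z} 1

/-! ## Graded Betti numbers of monomial ideals via the Taylor complex -/

variable {n : ℕ}

/-- The multidegree lcm of the monomial generators indexed by `S`. -/
def mlcm {r : ℕ} (g : Fin r → (Fin n → ℕ)) (S : Finset (Fin r)) : Fin n → ℕ :=
  fun x => S.sup fun k => g k x

/-- The differential of the Taylor complex tensored with the residue field `K`. -/
noncomputable def bdT {r : ℕ} (g : Fin r → (Fin n → ℕ)) :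
    (Finset (Fin r) →₀ K) →ₗ[K] (Finset (Fin r) →₀ K) :=
  Finsupp.lsum K fun S => LinearMap.toSpanSingleton K (Finset (Fin r) →₀ K)
    (∑ k ∈ S, if mlcm g (S.erase k) = mlcm g S
      then ((-1 : K) ^ ((S.filter (fun j => j < k)).card)) • Finsupp.single (S.erase k) (1 : K)
      else 0)

/-- The degree-`j` strand of the Taylor complex in homological degree `p`. -/
noncomputable def strand {r : ℕ} (g : Fin r → (Fin n → ℕ)) (p j : ℕ) :
    Submodule K (Finset (Fin r) →₀ K) :=
  Submodule.span K
    {c | ∃ S : Finset (Fin r), S.card = p ∧ (∑ x, mlcm g S x) = j ∧ c = Finsupp.single S 1}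

/-- `dim_K Tor_p(S/I, K)_j`, computed from the Taylor complex on the monomial
generators `g` of `I`. -/
noncomputable def torRank {r : ℕ} (g : Fin r → (Fin n → ℕ)) (p j : ℕ) : ℕ :=
  Module.finrank K ↥(strand K g p j ⊓ LinearMap.ker (bdT K g)) -
    Module.finrank K
      ↥(Submodule.map (bdT K g) (strand K g (p+1) j) ⊓
          (strand K g p j ⊓ LinearMap.ker (bdT K g)))

/-- The graded Betti number `β_{i,j}(I)` of the monomial ideal `I` generated by
the monomials with exponent vectors `g`, i.e. `dim_K Tor_i(I, K)_j = dim_K Tor_{i+1}(S/I, K)_j`. -/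
noncomputable def betti {r : ℕ} (g : Fin r → (Fin n → ℕ)) (i j : ℕ) : ℕ :=
  torRank K g (i+1) j

/-- The monomial with exponent vector `a`. -/
noncomputable def mono (a : Fin n → ℕ) : MvPolynomial (Fin n) K :=
  MvPolynomial.monomial (Finsupp.equivFunOnFinite.symm a) 1

/-- `g` is a list of exponent vectors of monomials generating the ideal `I`. -/
def IsGenSet {r : ℕ} (g : Fin r → (Fin n → ℕ)) (I : Ideal (MvPolynomial (Fin n) K)) : Prop :=
  Ideal.span (Set.range fun k => mono K (g k)) = I

/-- The ideal (generated by the monomials with exponent vectors `g`) has a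
`d`-linear resolution. -/
def HasLinRes {r : ℕ} (g : Fin r → (Fin n → ℕ)) (d : ℕ) : Prop :=
  ∀ i j, betti K g i j ≠ 0 → j = i + d

/-- Castelnuovo–Mumford regularity of a monomial ideal, from its Betti numbers. -/
noncomputable def regT {r : ℕ} (g : Fin r → (Fin n → ℕ)) : ℕ :=
  sSup {d | ∃ i j, betti K g i j ≠ 0 ∧ j = i + d}

/-! ## Edge ideals -/

/-- The edge ideal of a simple graph. -/
noncomputable def edgeIdeal (G : SimpleGraph (Fin n)) : Ideal (MvPolynomial (Fin n) K) :=
  Ideal.span {m | ∃ i j : Fin n, G.Adj i j ∧ m = MvPolynomial.X i * MvPolynomial.X j}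

/-- The edge set of `G` as a finset. -/
noncomputable def edgeFins (G : SimpleGraph (Fin n)) : Finset (Sym2 (Fin n)) :=
  letI : Fintype ↥G.edgeSet := Fintype.ofFinite _
  G.edgeFinset

/-- The canonical monomial (exponent vector) generators of the edge ideal of `G`. -/
noncomputable def edgeGens (G : SimpleGraph (Fin n)) : Fin (edgeFins G).card → (Fin n → ℕ) :=
  fun k x => if x ∈ ((edgeFins G).equivFin.symm k : Sym2 (Fin n)) then 1 else 0

/-- The graded Betti numbers `β_{i,j}(I(G))` of the edge ideal of `G` over `K`. -/
noncomputable def gBetti (G : SimpleGraph (Fin n)) (i j : ℕ) : ℕ :=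
  betti K (edgeGens G) i j

/-- The projective dimension `pd(I(G))` of the edge ideal of `G` over `K`. -/
noncomputable def gPd (G : SimpleGraph (Fin n)) : ℕ :=
  sSup {i | ∃ j, gBetti K G i j ≠ 0}

/-- The Green–Lazarsfeld index of the edge ideal of `G` over `K`
(`⊤` iff the ideal has a linear resolution). -/
noncomputable def gIndex (G : SimpleGraph (Fin n)) : ℕ∞ :=
  sInf {N : ℕ∞ | ∃ i j : ℕ, N = (i : ℕ∞) ∧ i + 2 < j ∧ gBetti K G i j ≠ 0}

/-- The regularity of the edge ideal of `G` over `K`. -/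
noncomputable def gReg (G : SimpleGraph (Fin n)) : ℕ :=
  sSup {d | ∃ i j, gBetti K G i j ≠ 0 ∧ j = i + d}

/-- The edge ideal of `G` has a (2-)linear resolution over `K`. -/
def gLinRes (G : SimpleGraph (Fin n)) : Prop :=
  ∀ i j, gBetti K G i j ≠ 0 → j = i + 2

/-- The edge ideal of `G` has almost maximal finite index over `K`:
`index(I(G)) = pd(I(G)) - 1` (with the index finite). -/
def AMFI (G : SimpleGraph (Fin n)) : Prop :=
  gIndex K G + 1 = (gPd K G : ℕ∞)

/-! ## Graph-theoretic notions -/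

/-- `H` contains an induced (chordless) cycle of length `l`. -/
def HasInducedCycle {W : Type} (H : SimpleGraph W) (l : ℕ) : Prop :=
  ∃ f : ZMod l → W, Function.Injective f ∧
    ∀ i j : ZMod l, H.Adj (f i) (f j) ↔ (j = i + 1 ∨ i = j + 1)

/-- `H` is chordal: it has no induced cycle of length greater than `3`. -/
def Chordal {W : Type} (H : SimpleGraph W) : Prop :=
  ∀ l : ℕ, 3 < l → ¬ HasInducedCycle H l

end EP

/-!
Taylor's resolution computes `β_{i,j}(I)` from simplicial complexes on the set of generators, and
Dowker duality followed by Alexander duality turns this into Hochster's formula: `β_{i,j}(I) ≠ 0` if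
and only if the independence complex of `G`, restricted to some `W` with `j` elements, has nonzero
reduced cohomology in dimension `j - i - 2`.

If the index is `t` and the projective dimension `t + 1`, then a nonlinear syzygy in degree `t` has
to be a nonzero `H¹` on `t + 3` vertices. The complement of `G` is the `1`-skeleton of the
independence complex, and a shortest closed walk in it along which the class has nonzero sum is an
induced cycle of length `t + 3`. With no further vertices this cycle would make the complement
connected, and there would be no syzygy in degree `t + 1`.

For the upper bound, let a cycle of the independence complex of `G[W]` pass through an independent
set `F` that dominates `W`. Enlarging `W` by vertices adjacent to `F` keeps `F` a facet, and a
boundary does not contain a facet, so each such `W` has a nonzero Betti number. The projective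
dimension then allows at most `t + 2` vertices with neighbours in `F`, and the index makes `W` large
compared with `F`. Edges of `G`, cycles of the complement and suspensions of such cycles provide the
sets `F`. For `t ≥ 2` they leave only one vertex off the induced cycle with neighbours on it; it is
adjacent to all but at most two other vertices, so that `n - 3 ≤ t + 2`. For `t = 1` the four-cycle
is an induced pair of edges of `G`, around which a case analysis shows that `n ≤ 6`.
-/

namespace EP

section ExteriorOperators

variable {K α : Type} [Field K] [LinearOrder α]

/-- The `K`-vector space with basis the finite subsets of `α`, that is, the augmented oriented
chains of the full simplex on `α`; equivalently, the exterior algebra on the basis `α`. -/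
abbrev Chain (K α : Type) [Field K] := Finset α →₀ K

/-- The sign with which the facet `s.erase v` occurs in the boundary of `s`. -/
def faceSign (K : Type) [Field K] (v : α) (s : Finset α) : K :=
  (-1) ^ (s.filter (· < v)).card

theorem faceSign_mul_self (v : α) (s : Finset α) : faceSign K v s * faceSign K v s = 1 := by
  rw [faceSign, ← mul_pow, neg_one_mul, neg_neg, one_pow]

theorem faceSign_ne_zero (v : α) (s : Finset α) : faceSign K v s ≠ 0 :=
  left_ne_zero_of_mul_eq_one (faceSign_mul_self v s)

theorem faceSign_insert {v : α} {s : Finset α} (hv : v ∉ s) (w : α) :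
    faceSign K w (insert v s) = if v < w then -faceSign K w s else faceSign K w s := by
  unfold faceSign
  rw [Finset.filter_insert]
  split_ifs
  · rw [Finset.card_insert_of_notMem (by simp [hv]), pow_succ, mul_neg_one]
  · rfl

theorem faceSign_erase {v : α} {s : Finset α} (hv : v ∈ s) (w : α) :
    faceSign K w (s.erase v) = if v < w then -faceSign K w s else faceSign K w s := by
  have h := faceSign_insert (K := K) (Finset.notMem_erase v s) w
  rw [Finset.insert_erase hv] at h
  rw [h]
  split_ifs <;> simp

/-- Left multiplication by the basis vector `v` in the exterior algebra. -/
noncomputable def wedge (K : Type) [Field K] (v : α) : Chain K α →ₗ[K] Chain K α :=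
  Finsupp.lsum K fun s => LinearMap.toSpanSingleton K _
    (if v ∈ s then 0 else faceSign K v s • single (insert v s) (1 : K))

/-- Contraction by the dual of the basis vector `v` in the exterior algebra: the part of the
simplicial boundary that removes the vertex `v`. -/
noncomputable def contract (K : Type) [Field K] (v : α) : Chain K α →ₗ[K] Chain K α :=
  Finsupp.lsum K fun s => LinearMap.toSpanSingleton K _
    (if v ∈ s then faceSign K v s • single (s.erase v) (1 : K) else 0)

theorem wedge_single_of_mem {v : α} {s : Finset α} (hv : v ∈ s) :
    wedge K v (single s 1) = 0 := by
  simp [wedge, hv]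

theorem wedge_single_of_notMem {v : α} {s : Finset α} (hv : v ∉ s) :
    wedge K v (single s 1) = faceSign K v s • single (insert v s) (1 : K) := by
  simp [wedge, hv]

theorem contract_single_of_mem {v : α} {s : Finset α} (hv : v ∈ s) :
    contract K v (single s 1) = faceSign K v s • single (s.erase v) (1 : K) := by
  simp [contract, hv]

theorem contract_single_of_notMem {v : α} {s : Finset α} (hv : v ∉ s) :
    contract K v (single s 1) = 0 := by
  simp [contract, hv]

theorem linearMap_ext_single {ι N : Type*} [AddCommMonoid N] [Module K N] {f g : (ι →₀ K) →ₗ[K] N}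
    (h : ∀ s, f (single s 1) = g (single s 1)) : f = g :=
  Finsupp.lhom_ext' fun s => LinearMap.ext_ring (h s)

theorem wedge_contract_add_contract_wedge (v : α) (x : Chain K α) :
    wedge K v (contract K v x) + contract K v (wedge K v x) = x := by
  suffices wedge K v ∘ₗ contract K v + contract K v ∘ₗ wedge K v = LinearMap.id from
    LinearMap.congr_fun this x
  refine linearMap_ext_single fun s => ?_
  simp only [LinearMap.add_apply, LinearMap.comp_apply, LinearMap.id_apply]
  by_cases hv : v ∈ s
  · rw [contract_single_of_mem hv, wedge_single_of_mem hv, map_smul, map_zero, add_zero,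
      wedge_single_of_notMem (Finset.notMem_erase v s), faceSign_erase hv, if_neg (lt_irrefl v),
      Finset.insert_erase hv, smul_smul, faceSign_mul_self, one_smul]
  · rw [contract_single_of_notMem hv, wedge_single_of_notMem hv, map_smul, map_zero, zero_add,
      contract_single_of_mem (Finset.mem_insert_self v s), faceSign_insert hv,
      if_neg (lt_irrefl v), Finset.erase_insert hv, smul_smul, faceSign_mul_self, one_smul]

/-- Moving `v` and `w` past each other changes exactly one of the two signs. -/
theorem faceSign_mul_ite_add {v w : α} (hvw : v ≠ w) (a b : K) :
    (b * if w < v then -a else a) + (a * if v < w then -b else b) = 0 := by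
  rcases hvw.lt_or_gt with h | h <;> simp [h, h.not_gt, mul_comm]

theorem contract_wedge_of_ne {v w : α} (hvw : v ≠ w) (x : Chain K α) :
    contract K w (wedge K v x) = -wedge K v (contract K w x) := by
  rw [eq_neg_iff_add_eq_zero]
  suffices contract K w ∘ₗ wedge K v + wedge K v ∘ₗ contract K w = 0 from
    LinearMap.congr_fun this x
  refine linearMap_ext_single fun s => ?_
  simp only [LinearMap.add_apply, LinearMap.comp_apply, LinearMap.zero_apply]
  by_cases hv : v ∈ s <;> by_cases hw : w ∈ s
  · rw [wedge_single_of_mem hv, contract_single_of_mem hw, map_smul,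
      wedge_single_of_mem (Finset.mem_erase.2 ⟨hvw, hv⟩), map_zero, smul_zero, add_zero]
  · rw [wedge_single_of_mem hv, contract_single_of_notMem hw, map_zero, map_zero, add_zero]
  · rw [wedge_single_of_notMem hv, contract_single_of_mem hw, map_smul, map_smul,
      contract_single_of_mem (Finset.mem_insert_of_mem hw),
      wedge_single_of_notMem (fun h => hv (Finset.mem_of_mem_erase h)), faceSign_insert hv,
      faceSign_erase hw, Finset.erase_insert_of_ne hvw, smul_smul, smul_smul, ← add_smul,
      add_comm, faceSign_mul_ite_add hvw, zero_smul]
  · rw [wedge_single_of_notMem hv, contract_single_of_notMem hw, map_smul, map_zero, add_zero,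
      contract_single_of_notMem (by simp [hw, hvw.symm]), smul_zero]

theorem contract_contract_self (v : α) (x : Chain K α) : contract K v (contract K v x) = 0 := by
  suffices contract K v ∘ₗ contract K v = 0 from LinearMap.congr_fun this x
  refine linearMap_ext_single fun s => ?_
  rw [LinearMap.comp_apply, LinearMap.zero_apply]
  by_cases hv : v ∈ s
  · rw [contract_single_of_mem hv, map_smul, contract_single_of_notMem (Finset.notMem_erase v s),
      smul_zero]
  · rw [contract_single_of_notMem hv, map_zero]

theorem contract_contract (v w : α) (x : Chain K α) :
    contract K v (contract K w x) = -contract K w (contract K v x) := by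
  rcases eq_or_ne v w with rfl | hvw
  · rw [contract_contract_self, neg_zero]
  rw [eq_neg_iff_add_eq_zero]
  suffices contract K v ∘ₗ contract K w + contract K w ∘ₗ contract K v = 0 from
    LinearMap.congr_fun this x
  refine linearMap_ext_single fun s => ?_
  simp only [LinearMap.add_apply, LinearMap.comp_apply, LinearMap.zero_apply]
  by_cases hv : v ∈ s <;> by_cases hw : w ∈ s
  · rw [contract_single_of_mem hv, contract_single_of_mem hw, map_smul, map_smul,
      contract_single_of_mem (Finset.mem_erase.2 ⟨hvw, hv⟩),
      contract_single_of_mem (Finset.mem_erase.2 ⟨hvw.symm, hw⟩), faceSign_erase hv,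
      faceSign_erase hw, Finset.erase_right_comm, smul_smul, smul_smul, ← add_smul,
      faceSign_mul_ite_add hvw, zero_smul]
  · rw [contract_single_of_mem hv, contract_single_of_notMem hw, map_smul, map_zero, zero_add,
      contract_single_of_notMem (fun h => hw (Finset.mem_of_mem_erase h)), smul_zero]
  · rw [contract_single_of_notMem hv, contract_single_of_mem hw, map_smul, map_zero, add_zero,
      contract_single_of_notMem (fun h => hv (Finset.mem_of_mem_erase h)), smul_zero]
  · rw [contract_single_of_notMem hv, contract_single_of_notMem hw, map_zero, map_zero, add_zero]

theorem wedge_wedge_self (v : α) (x : Chain K α) : wedge K v (wedge K v x) = 0 := by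
  suffices wedge K v ∘ₗ wedge K v = 0 from LinearMap.congr_fun this x
  refine linearMap_ext_single fun s => ?_
  rw [LinearMap.comp_apply, LinearMap.zero_apply]
  by_cases hv : v ∈ s
  · rw [wedge_single_of_mem hv, map_zero]
  · rw [wedge_single_of_notMem hv, map_smul, wedge_single_of_mem (Finset.mem_insert_self v s),
      smul_zero]

theorem wedge_wedge (v w : α) (x : Chain K α) :
    wedge K v (wedge K w x) = -wedge K w (wedge K v x) := by
  rcases eq_or_ne v w with rfl | hvw
  · rw [wedge_wedge_self, neg_zero]
  rw [eq_neg_iff_add_eq_zero]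
  suffices wedge K v ∘ₗ wedge K w + wedge K w ∘ₗ wedge K v = 0 from LinearMap.congr_fun this x
  refine linearMap_ext_single fun s => ?_
  simp only [LinearMap.add_apply, LinearMap.comp_apply, LinearMap.zero_apply]
  by_cases hv : v ∈ s <;> by_cases hw : w ∈ s
  · rw [wedge_single_of_mem hv, wedge_single_of_mem hw, map_zero, map_zero, add_zero]
  · rw [wedge_single_of_mem hv, wedge_single_of_notMem hw, map_smul, map_zero, add_zero,
      wedge_single_of_mem (Finset.mem_insert_of_mem hv), smul_zero]
  · rw [wedge_single_of_notMem hv, wedge_single_of_mem hw, map_smul, map_zero, zero_add,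
      wedge_single_of_mem (Finset.mem_insert_of_mem hw), smul_zero]
  · rw [wedge_single_of_notMem hv, wedge_single_of_notMem hw, map_smul, map_smul,
      wedge_single_of_notMem (by simp [hv, hvw]), wedge_single_of_notMem (by simp [hw, hvw.symm]),
      faceSign_insert hv, faceSign_insert hw, Finset.insert_comm, smul_smul, smul_smul, ← add_smul,
      faceSign_mul_ite_add hvw, zero_smul]

/-- The part of the simplicial boundary that removes the vertices lying in `T`. -/
noncomputable def partialBoundary (K : Type) [Field K] (T : Finset α) : Chain K α →ₗ[K] Chain K α :=
  ∑ v ∈ T, contract K v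

theorem partialBoundary_apply (T : Finset α) (x : Chain K α) :
    partialBoundary K T x = ∑ v ∈ T, contract K v x :=
  LinearMap.sum_apply _ _ _

theorem contract_partialBoundary (v : α) (T : Finset α) (x : Chain K α) :
    contract K v (partialBoundary K T x) = -partialBoundary K T (contract K v x) := by
  rw [partialBoundary_apply, partialBoundary_apply, map_sum, ← Finset.sum_neg_distrib]
  exact Finset.sum_congr rfl fun w _ => contract_contract v w x

theorem partialBoundary_partialBoundary (S T : Finset α) (x : Chain K α) :
    partialBoundary K S (partialBoundary K T x) = -partialBoundary K T (partialBoundary K S x) := by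
  rw [partialBoundary_apply S, partialBoundary_apply S, map_sum, ← Finset.sum_neg_distrib]
  exact Finset.sum_congr rfl fun v _ => contract_partialBoundary v T x

theorem partialBoundary_partialBoundary_self (T : Finset α) (x : Chain K α) :
    partialBoundary K T (partialBoundary K T x) = 0 := by
  induction T using Finset.induction_on with
  | empty => simp [partialBoundary]
  | insert a T ha ih =>
    have hsum : ∀ y : Chain K α,
        partialBoundary K (insert a T) y = contract K a y + partialBoundary K T y := fun y => by
      rw [partialBoundary_apply, Finset.sum_insert ha, partialBoundary_apply]
    rw [hsum, hsum, map_add, map_add, contract_contract_self, ih, contract_partialBoundary]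
    abel

theorem bdS_single (s : Finset α) :
    bdS K (single s 1) = ∑ v ∈ s, faceSign K v s • single (s.erase v) (1 : K) := by
  simp [bdS, bdFace, faceSign]

theorem bdS_single_eq_partialBoundary {s T : Finset α} (hsT : s ⊆ T) :
    bdS K (single s 1) = partialBoundary K T (single s 1) := by
  rw [bdS_single, partialBoundary_apply, ← Finset.sum_subset hsT fun v _ hv =>
    contract_single_of_notMem hv]
  exact Finset.sum_congr rfl fun v hv => (contract_single_of_mem hv).symm

end ExteriorOperators

section ChainsOn

variable {K α : Type} [Field K]

/-- The chains supported on a family `A` of finite sets. -/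
abbrev chainsOn (K : Type) [Field K] {α : Type} (A : Set (Finset α)) : Submodule K (Chain K α) :=
  Finsupp.supported K K A

theorem mem_chainsOn {A : Set (Finset α)} {x : Chain K α} :
    x ∈ chainsOn K A ↔ ∀ s ∉ A, x s = 0 :=
  Finsupp.mem_supported' K x

theorem chainsOn_mono {A B : Set (Finset α)} (h : A ⊆ B) : chainsOn K A ≤ chainsOn K B :=
  Finsupp.supported_mono h

theorem smul_single_mem_chainsOn {A : Set (Finset α)} {s : Finset α} (hs : s ∈ A) (c : K) :
    c • single s (1 : K) ∈ chainsOn K A :=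
  Submodule.smul_mem _ c (Finsupp.single_mem_supported K 1 hs)

theorem map_mem_of_forall_single {N : Type*} [AddCommGroup N] [Module K N] {f : Chain K α →ₗ[K] N}
    {A : Set (Finset α)} {B : Submodule K N} (h : ∀ s ∈ A, f (single s 1) ∈ B) {x : Chain K α}
    (hx : x ∈ chainsOn K A) : f x ∈ B := by
  suffices chainsOn K A ≤ B.comap f from this hx
  rw [chainsOn, Finsupp.supported_eq_span_single, Submodule.span_le]
  rintro _ ⟨s, hs, rfl⟩
  exact h s hs

theorem apply_eq_zero_of_mem_chainsOn {A : Set (Finset α)} {ζ : Chain K α →ₗ[K] K}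
    (h : ∀ s ∈ A, ζ (single s 1) = 0) : ∀ x ∈ chainsOn K A, ζ x = 0 := fun _ hx =>
  (Submodule.mem_bot K).1 (map_mem_of_forall_single (B := ⊥) h hx)

theorem exists_mem_chainsOn_Iic (x : Chain K α) : ∃ T : Finset α, x ∈ chainsOn K (Set.Iic T) := by
  classical
  exact ⟨x.support.biUnion id, fun _ hs => Finset.subset_biUnion_of_mem id hs⟩

theorem eq_zero_of_mem_chainsOn_of_disjoint {A B : Set (Finset α)} (h : Disjoint A B)
    {x : Chain K α} (hA : x ∈ chainsOn K A) (hB : x ∈ chainsOn K B) : x = 0 :=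
  (Finsupp.disjoint_supported_supported h).le_bot ⟨hA, hB⟩

open Classical in
/-- The projection of chains onto the chains supported on the family `A`. -/
noncomputable def proj (K : Type) [Field K] {α : Type} (A : Set (Finset α)) :
    Chain K α →ₗ[K] Chain K α :=
  (chainsOn K A).subtype ∘ₗ Finsupp.restrictDom K K A

theorem proj_mem_chainsOn (A : Set (Finset α)) (x : Chain K α) : proj K A x ∈ chainsOn K A :=
  Subtype.property _

theorem proj_apply_of_mem {A : Set (Finset α)} {s : Finset α} (hs : s ∈ A) (x : Chain K α) :
    proj K A x s = x s := by
  classical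
  exact Finsupp.filter_apply_pos (· ∈ A) x hs

theorem proj_apply_of_notMem {A : Set (Finset α)} {s : Finset α} (hs : s ∉ A) (x : Chain K α) :
    proj K A x s = 0 :=
  mem_chainsOn.1 (proj_mem_chainsOn A x) s hs

theorem proj_eq_self {A : Set (Finset α)} {x : Chain K α} (hx : x ∈ chainsOn K A) :
    proj K A x = x := by
  ext s
  by_cases hs : s ∈ A
  · exact proj_apply_of_mem hs x
  · rw [proj_apply_of_notMem hs, mem_chainsOn.1 hx s hs]

theorem sub_proj_mem_chainsOn {Γ : Set (Finset α)} (A : Set (Finset α)) {x : Chain K α}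
    (hx : x ∈ chainsOn K Γ) : x - proj K A x ∈ chainsOn K (Γ \ A) := by
  refine mem_chainsOn.2 fun s hs => ?_
  rw [Finsupp.sub_apply]
  by_cases hsA : s ∈ A
  · rw [proj_apply_of_mem hsA, sub_self]
  · rw [proj_apply_of_notMem hsA, sub_zero]
    exact mem_chainsOn.1 hx s fun hsΓ => hs ⟨hsΓ, hsA⟩

theorem proj_mem_chainsOn_of_mem {Γ : Set (Finset α)} (A : Set (Finset α)) {x : Chain K α}
    (hx : x ∈ chainsOn K Γ) : proj K A x ∈ chainsOn K (Γ ∩ A) := by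
  refine mem_chainsOn.2 fun s hs => ?_
  by_cases hsA : s ∈ A
  · rw [proj_apply_of_mem hsA]
    exact mem_chainsOn.1 hx s fun hsΓ => hs ⟨hsΓ, hsA⟩
  · exact proj_apply_of_notMem hsA x

theorem proj_eq_zero_of_disjoint {A B : Set (Finset α)} (h : Disjoint A B) {x : Chain K α}
    (hx : x ∈ chainsOn K A) : proj K B x = 0 :=
  eq_zero_of_mem_chainsOn_of_disjoint h
    (chainsOn_mono Set.inter_subset_left (proj_mem_chainsOn_of_mem B hx)) (proj_mem_chainsOn B x)

theorem mem_chainsOn_inter {A B : Set (Finset α)} {x : Chain K α} (hA : x ∈ chainsOn K A)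
    (hB : x ∈ chainsOn K B) : x ∈ chainsOn K (A ∩ B) := by
  rw [← proj_eq_self hB]
  exact proj_mem_chainsOn_of_mem B hA

theorem mem_chainsOn_iff_proj_eq_zero {Γ A : Set (Finset α)} {x : Chain K α}
    (hx : x ∈ chainsOn K Γ) : x ∈ chainsOn K A ↔ proj K (Γ \ A) x = 0 := by
  refine ⟨proj_eq_zero_of_disjoint Set.disjoint_sdiff_right, fun h => ?_⟩
  have := sub_proj_mem_chainsOn (Γ \ A) hx
  rw [h, sub_zero] at this
  exact chainsOn_mono (fun s hs => not_not.1 fun hsA => hs.2 ⟨hs.1, hsA⟩) this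

theorem map_proj {X : Type} {A : Set (Finset α)} {B : Set (Finset X)}
    {f : Chain K α →ₗ[K] Chain K X} (hA : ∀ s ∈ A, f (single s 1) ∈ chainsOn K B)
    (hAc : ∀ s ∉ A, f (single s 1) ∈ chainsOn K Bᶜ) (x : Chain K α) :
    f (proj K A x) = proj K B (f x) := by
  have hin : f (proj K A x) ∈ chainsOn K B := map_mem_of_forall_single hA (proj_mem_chainsOn A x)
  have hout : f (x - proj K A x) ∈ chainsOn K Bᶜ :=
    map_mem_of_forall_single (A := Set.univ \ A) (fun s hs => hAc s hs.2)
      (sub_proj_mem_chainsOn A (by simp))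
  calc f (proj K A x) = proj K B (f (proj K A x)) + proj K B (f (x - proj K A x)) := by
        rw [proj_eq_self hin, proj_eq_zero_of_disjoint disjoint_compl_left hout, add_zero]
    _ = proj K B (f x) := by rw [← map_add, ← map_add, add_sub_cancel]

end ChainsOn

section Boundary

variable {K α : Type} [Field K] [LinearOrder α]

theorem wedge_mem_chainsOn {A B : Set (Finset α)} {v : α} (h : ∀ s ∈ A, v ∉ s → insert v s ∈ B)
    {x : Chain K α} (hx : x ∈ chainsOn K A) : wedge K v x ∈ chainsOn K B := by
  refine map_mem_of_forall_single (fun s hs => ?_) hx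
  by_cases hv : v ∈ s
  · rw [wedge_single_of_mem hv]
    exact zero_mem _
  · rw [wedge_single_of_notMem hv]
    exact smul_single_mem_chainsOn (h s hs hv) _

theorem contract_mem_chainsOn {A B : Set (Finset α)} {v : α} (h : ∀ s ∈ A, v ∈ s → s.erase v ∈ B)
    {x : Chain K α} (hx : x ∈ chainsOn K A) : contract K v x ∈ chainsOn K B := by
  refine map_mem_of_forall_single (fun s hs => ?_) hx
  by_cases hv : v ∈ s
  · rw [contract_single_of_mem hv]
    exact smul_single_mem_chainsOn (h s hs hv) _
  · rw [contract_single_of_notMem hv]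
    exact zero_mem _

theorem partialBoundary_mem_chainsOn {A B : Set (Finset α)} {T : Finset α}
    (h : ∀ s ∈ A, ∀ v ∈ T, v ∈ s → s.erase v ∈ B) {x : Chain K α} (hx : x ∈ chainsOn K A) :
    partialBoundary K T x ∈ chainsOn K B := by
  rw [partialBoundary_apply]
  exact Submodule.sum_mem _ fun v hv => contract_mem_chainsOn (fun s hs => h s hs v hv) hx

theorem bdS_mem_chainsOn {A B : Set (Finset α)} (h : ∀ s ∈ A, ∀ v ∈ s, s.erase v ∈ B)
    {x : Chain K α} (hx : x ∈ chainsOn K A) : bdS K x ∈ chainsOn K B := by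
  refine map_mem_of_forall_single (fun s hs => ?_) hx
  rw [bdS_single]
  exact Submodule.sum_mem _ fun v hv => smul_single_mem_chainsOn (h s hs v hv) _

theorem bdS_mem_chainsOn_of_isLowerSet {A : Set (Finset α)} (hA : IsLowerSet A) {x : Chain K α}
    (hx : x ∈ chainsOn K A) : bdS K x ∈ chainsOn K A :=
  bdS_mem_chainsOn (fun s hs v _ => hA (s.erase_subset v) hs) hx

theorem bdS_eq_partialBoundary {T : Finset α} {x : Chain K α} (hx : x ∈ chainsOn K (Set.Iic T)) :
    bdS K x = partialBoundary K T x := by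
  rw [← sub_eq_zero, ← LinearMap.sub_apply, ← Submodule.mem_bot K]
  refine map_mem_of_forall_single (fun s hs => ?_) hx
  rw [Submodule.mem_bot, LinearMap.sub_apply, bdS_single_eq_partialBoundary hs, sub_self]

theorem bdS_bdS (x : Chain K α) : bdS K (bdS K x) = 0 := by
  obtain ⟨T, hT⟩ := exists_mem_chainsOn_Iic x
  rw [bdS_eq_partialBoundary (bdS_mem_chainsOn_of_isLowerSet (isLowerSet_Iic T) hT),
    bdS_eq_partialBoundary hT, partialBoundary_partialBoundary_self]

theorem partialBoundary_wedge_of_notMem {v : α} {T : Finset α} (hv : v ∉ T) (x : Chain K α) :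
    partialBoundary K T (wedge K v x) = -wedge K v (partialBoundary K T x) := by
  rw [partialBoundary_apply, partialBoundary_apply, map_sum, ← Finset.sum_neg_distrib]
  exact Finset.sum_congr rfl fun w hw =>
    contract_wedge_of_ne (ne_of_mem_of_not_mem hw hv).symm x

theorem partialBoundary_wedge_of_mem {v : α} {T : Finset α} (hv : v ∈ T) (x : Chain K α) :
    partialBoundary K T (wedge K v x) = x - wedge K v (partialBoundary K T x) := by
  have hsplit : ∀ y : Chain K α,
      partialBoundary K T y = contract K v y + partialBoundary K (T.erase v) y := fun y => by
    rw [partialBoundary_apply, partialBoundary_apply, Finset.add_sum_erase _ (contract K · y) hv]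
  have hv := wedge_contract_add_contract_wedge v x
  rw [hsplit, hsplit, map_add, partialBoundary_wedge_of_notMem (Finset.notMem_erase v T),
    ← sub_eq_of_eq_add' hv.symm]
  abel

theorem bdS_wedge (v : α) (x : Chain K α) : bdS K (wedge K v x) = x - wedge K v (bdS K x) := by
  obtain ⟨T, hT⟩ := exists_mem_chainsOn_Iic x
  have hvT : wedge K v x ∈ chainsOn K (Set.Iic (insert v T)) :=
    wedge_mem_chainsOn (fun s hs _ => Finset.insert_subset_insert v hs) hT
  rw [bdS_eq_partialBoundary hvT, bdS_eq_partialBoundary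
      (chainsOn_mono (Set.Iic_subset_Iic.2 (Finset.subset_insert v T)) hT),
    partialBoundary_wedge_of_mem (Finset.mem_insert_self v T)]

theorem bdS_partialBoundary (T : Finset α) (x : Chain K α) :
    bdS K (partialBoundary K T x) = -partialBoundary K T (bdS K x) := by
  obtain ⟨S, hS⟩ := exists_mem_chainsOn_Iic x
  rw [bdS_eq_partialBoundary hS, bdS_eq_partialBoundary (T := S),
    partialBoundary_partialBoundary]
  exact partialBoundary_mem_chainsOn (fun s hs v _ _ => (s.erase_subset v).trans hs) hS

theorem bdS_contract (v : α) (x : Chain K α) :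
    bdS K (contract K v x) = -contract K v (bdS K x) := by
  simpa only [partialBoundary_apply, Finset.sum_singleton] using bdS_partialBoundary {v} x

theorem bdS_proj_card (p : ℕ) (x : Chain K α) :
    bdS K (proj K {s | s.card = p} x) = proj K {s | s.card + 1 = p} (bdS K x) := by
  refine map_proj (fun s hs => ?_) (fun s hs => ?_) x <;>
  · rw [bdS_single]
    refine Submodule.sum_mem _ fun v hv => smul_single_mem_chainsOn ?_ _
    simpa [Finset.card_erase_add_one hv] using hs

end Boundary

section RelativeHomology

variable {K α : Type} [Field K] [LinearOrder α] {Γ A : Set (Finset α)} {p : ℕ}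

/-- The pair `(Γ, A)` of families of finite sets has nonzero relative simplicial homology
(over `K`) in the faces with `p` vertices, that is, in dimension `p - 1`. -/
def HasRelHomology (K : Type) [Field K] (Γ A : Set (Finset α)) (p : ℕ) : Prop :=
  ∃ z ∈ chainsOn K {s | s ∈ Γ ∧ s.card = p}, bdS K z ∈ chainsOn K A ∧
    ∀ y ∈ chainsOn K Γ, z - bdS K y ∉ chainsOn K A

theorem exists_card_eq_add_one_of_sub_bdS_mem {z y : Chain K α}
    (hz : z ∈ chainsOn K {s | s.card = p}) (hy : y ∈ chainsOn K Γ)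
    (hzy : z - bdS K y ∈ chainsOn K A) :
    ∃ y' ∈ chainsOn K {s | s ∈ Γ ∧ s.card = p + 1}, z - bdS K y' ∈ chainsOn K A := by
  refine ⟨proj K {s | s.card = p + 1} y, proj_mem_chainsOn_of_mem _ hy, ?_⟩
  have hproj := chainsOn_mono Set.inter_subset_left (proj_mem_chainsOn_of_mem {s | s.card = p} hzy)
  have hbd := bdS_proj_card (p + 1) y
  simp only [Nat.add_right_cancel_iff] at hbd
  rwa [map_sub, proj_eq_self hz, ← hbd] at hproj

end RelativeHomology

section AlexanderDual

variable {β : Type} [DecidableEq β] {Δ : Set (Finset β)} {W : Finset β}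

/-- The Alexander dual, relative to the vertex set `W`, of the restriction to `W` of the
simplicial complex `Δ`. -/
def alexanderDual (Δ : Set (Finset β)) (W : Finset β) : Set (Finset β) :=
  {F | F ⊆ W ∧ W \ F ∉ Δ}

theorem isLowerSet_alexanderDual (hΔ : IsLowerSet Δ) (W : Finset β) :
    IsLowerSet (alexanderDual Δ W) := fun _ _ hts hs =>
  ⟨hts.trans hs.1, fun h => hs.2 (hΔ (Finset.sdiff_subset_sdiff subset_rfl hts) h)⟩

end AlexanderDual

section IndependenceComplex

variable {β : Type}

/-- The independence complex of a graph. -/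
def indepComplex (G : SimpleGraph β) : Set (Finset β) :=
  {F | ∀ x ∈ F, ∀ y ∈ F, ¬G.Adj x y}

theorem isLowerSet_indepComplex (G : SimpleGraph β) : IsLowerSet (indepComplex G) :=
  fun _ _ hts hs x hx y hy => hs x (hts hx) y (hts hy)

theorem singleton_mem_indepComplex (G : SimpleGraph β) (x : β) : {x} ∈ indepComplex G := by
  simp [indepComplex]

variable [DecidableEq β]

theorem insert_mem_indepComplex_iff {G : SimpleGraph β} {v : β} {F : Finset β} :
    insert v F ∈ indepComplex G ↔ (∀ y ∈ F, ¬G.Adj v y) ∧ F ∈ indepComplex G := by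
  refine ⟨fun h => ⟨fun y hy => h v (Finset.mem_insert_self v F) y (Finset.mem_insert_of_mem hy),
    isLowerSet_indepComplex G (Finset.subset_insert v F) h⟩, fun ⟨hv, hF⟩ x hx y hy => ?_⟩
  rcases Finset.mem_insert.1 hx with rfl | hxF <;> rcases Finset.mem_insert.1 hy with rfl | hyF
  · exact G.loopless.irrefl _
  · exact hv y hyF
  · exact fun hxy => hv x hxF hxy.symm
  · exact hF x hxF y hyF

theorem pair_mem_indepComplex_iff {G : SimpleGraph β} {x y : β} :
    {x, y} ∈ indepComplex G ↔ ¬G.Adj x y := by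
  simp [insert_mem_indepComplex_iff, singleton_mem_indepComplex]

end IndependenceComplex

section Tor

variable {K β : Type} [Field K] [LinearOrder β] {Δ : Set (Finset β)} {W : Finset β} {p : ℕ}

/-- `Tor_p(K[Δ], K)` is nonzero in the squarefree multidegree `W`. By Hochster's formula this says
that the reduced cohomology of the restriction of `Δ` to `W` is nonzero in dimension
`|W| - p - 1`; replacing faces by their complements in `W` turns that cohomology into the homology,
in the faces with `p` vertices, of the full simplex on `W` relative to the Alexander dual. -/
def HasTor (K : Type) [Field K] (Δ : Set (Finset β)) (W : Finset β) (p : ℕ) : Prop :=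
  HasRelHomology K (Set.Iic W) (alexanderDual Δ W) p

theorem HasTor.le_card (h : HasTor K Δ W p) : p ≤ W.card := by
  obtain ⟨z, hz, -, hno⟩ := h
  by_contra hp
  have hempty : {s | s ∈ Set.Iic W ∧ s.card = p} = ∅ :=
    Set.eq_empty_of_forall_notMem fun s hs => hp (hs.2 ▸ Finset.card_le_card hs.1)
  rw [hempty, chainsOn, Finsupp.supported_empty, Submodule.mem_bot] at hz
  exact hno 0 (zero_mem _) (by simp [hz])

/-- The vanishing and nonvanishing of Tor that says that the edge ideal of `G` has index `t` and
projective dimension `t + 1`. Homological degrees are those of the quotient by the edge ideal, so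
they are shifted by one, and `Tor_p` is nonlinear in degree `W` when `p + 2 ≤ |W|`. -/
structure HasAlmostMaximalIndex (K : Type) [Field K] (G : SimpleGraph β) (t : ℕ) : Prop where
  le_add_two : ∀ W p, HasTor K (indepComplex G) W p → p ≤ t + 2
  lt_of_nonlinear : ∀ W p, HasTor K (indepComplex G) W p → p + 2 ≤ W.card → t < p
  exists_nonlinear : ∃ W, HasTor K (indepComplex G) W (t + 1) ∧ t + 3 ≤ W.card
  exists_add_two : ∃ W, HasTor K (indepComplex G) W (t + 2)

end Tor

section Excision

variable {K α : Type} [Field K] [LinearOrder α] {Γ A : Set (Finset α)} {p : ℕ}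

theorem HasRelHomology.nonempty_sdiff (h : HasRelHomology K Γ A p) : (Γ \ A).Nonempty := by
  obtain ⟨z, hz, -, hno⟩ := h
  by_contra hempty
  refine hno 0 (zero_mem _) ?_
  rw [map_zero, sub_zero]
  exact chainsOn_mono (Set.inter_subset_left.trans
    (Set.sdiff_eq_empty.1 (Set.not_nonempty_iff_eq_empty.1 hempty))) hz

theorem proj_sdiff_bdS_proj_sdiff (hA : IsLowerSet A) {x : Chain K α} (hx : x ∈ chainsOn K Γ) :
    proj K (Γ \ A) (bdS K (proj K (Γ \ A) x)) = proj K (Γ \ A) (bdS K x) := by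
  have hxA : x - proj K (Γ \ A) x ∈ chainsOn K A :=
    chainsOn_mono (fun s hs => not_not.1 fun hsA => hs.2 ⟨hs.1, hsA⟩)
      (sub_proj_mem_chainsOn (Γ \ A) hx)
  rw [eq_comm, ← sub_eq_zero, ← map_sub, ← map_sub]
  exact proj_eq_zero_of_disjoint Set.disjoint_sdiff_right (bdS_mem_chainsOn_of_isLowerSet hA hxA)

/-- The quotient of the chains on `Γ` by the chains on `A` is spanned by `Γ \ A`, with the truncated
boundary as differential. -/
theorem hasRelHomology_iff_proj (hΓ : IsLowerSet Γ) (hA : IsLowerSet A) :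
    HasRelHomology K Γ A p ↔ ∃ z ∈ chainsOn K {s | s ∈ Γ \ A ∧ s.card = p},
      proj K (Γ \ A) (bdS K z) = 0 ∧
        ∀ y ∈ chainsOn K (Γ \ A), proj K (Γ \ A) (bdS K y) ≠ z := by
  have hmem : ∀ {x}, x ∈ chainsOn K Γ → (x ∈ chainsOn K A ↔ proj K (Γ \ A) x = 0) :=
    mem_chainsOn_iff_proj_eq_zero
  have hbdΓ : ∀ {x}, x ∈ chainsOn K Γ → bdS K x ∈ chainsOn K Γ :=
    bdS_mem_chainsOn_of_isLowerSet hΓ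
  constructor
  · rintro ⟨z, hz, hbd, hno⟩
    have hzΓ : z ∈ chainsOn K Γ := chainsOn_mono Set.inter_subset_left hz
    refine ⟨proj K (Γ \ A) z, chainsOn_mono (fun s hs => Set.mem_ofPred.2 ⟨hs.2, hs.1.2⟩)
      (proj_mem_chainsOn_of_mem (Γ \ A) hz), ?_, fun y hy hyz => ?_⟩
    · rwa [proj_sdiff_bdS_proj_sdiff hA hzΓ, ← hmem (hbdΓ hzΓ)]
    · have hyΓ := chainsOn_mono Set.sdiff_subset hy
      exact hno y hyΓ ((hmem (sub_mem hzΓ (hbdΓ hyΓ))).2 (by rw [map_sub, hyz, sub_self]))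
  · rintro ⟨z, hz, hbd, hno⟩
    have hzΓA : z ∈ chainsOn K (Γ \ A) := chainsOn_mono Set.inter_subset_left hz
    have hzΓ : z ∈ chainsOn K Γ := chainsOn_mono Set.sdiff_subset hzΓA
    refine ⟨z, chainsOn_mono (fun s hs => Set.mem_ofPred.2 ⟨hs.1.1, hs.2⟩) hz,
      (hmem (hbdΓ hzΓ)).2 hbd, fun y hy hyz => hno _ (proj_mem_chainsOn (Γ \ A) y) ?_⟩
    have hproj := (hmem (sub_mem hzΓ (hbdΓ hy))).1 hyz
    rw [map_sub, proj_eq_self hzΓA, sub_eq_zero] at hproj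
    rw [proj_sdiff_bdS_proj_sdiff hA hy, hproj]

theorem hasRelHomology_congr_of_sdiff_eq {Γ' A' : Set (Finset α)} (hΓ : IsLowerSet Γ)
    (hA : IsLowerSet A) (hΓ' : IsLowerSet Γ') (hA' : IsLowerSet A') (h : Γ \ A = Γ' \ A') :
    HasRelHomology K Γ A p ↔ HasRelHomology K Γ' A' p := by
  rw [hasRelHomology_iff_proj hΓ hA, hasRelHomology_iff_proj hΓ' hA', h]

end Excision

section Acyclic

variable {K α : Type} [Field K] [LinearOrder α] {Γ A : Set (Finset α)} {p : ℕ}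

/-- The chains on the family `A` have no homology, in any dimension and including the empty face. -/
def Acyclic (K : Type) [Field K] (A : Set (Finset α)) : Prop :=
  ∀ z ∈ chainsOn K A, bdS K z = 0 → ∃ y ∈ chainsOn K A, bdS K y = z

theorem Acyclic.hasRelHomology_iff (hA : Acyclic K A) (hAΓ : A ⊆ Γ) :
    HasRelHomology K Γ A p ↔ HasRelHomology K Γ ∅ p := by
  have hbot : ∀ x : Chain K α, x ∈ chainsOn K ∅ ↔ x = 0 := fun x => by
    rw [chainsOn, Finsupp.supported_empty, Submodule.mem_bot]
  simp only [HasRelHomology, hbot]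
  constructor
  · rintro ⟨z, hz, hbd, hno⟩
    have hz' : z ∈ chainsOn K {s | s.card = p} := chainsOn_mono Set.inter_subset_right hz
    obtain ⟨a, ha, haz⟩ := hA (bdS K z) hbd (bdS_bdS z)
    have ha' := proj_mem_chainsOn_of_mem {s : Finset α | s.card = p} ha
    refine ⟨z - proj K {s | s.card = p} a, sub_mem hz
      (chainsOn_mono (Set.inter_subset_inter_left _ hAΓ) ha'), ?_, fun y hy hzy => hno y hy ?_⟩
    · rw [map_sub, bdS_proj_card, haz, ← bdS_proj_card, proj_eq_self hz', sub_self]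
    · rw [sub_right_comm, sub_eq_zero] at hzy
      exact hzy ▸ chainsOn_mono Set.inter_subset_left ha'
  · rintro ⟨z, hz, hbd, hno⟩
    refine ⟨z, hz, hbd ▸ zero_mem _, fun y hy hzy => ?_⟩
    obtain ⟨b, hb, hbz⟩ := hA _ hzy (by rw [map_sub, hbd, bdS_bdS, sub_zero])
    refine hno (y + b) (add_mem hy (chainsOn_mono hAΓ hb)) ?_
    rw [map_add, hbz, add_sub_cancel, sub_self]

/-- The linear operator that joins each face `s` with the vertex `piv s`. -/
noncomputable def coneHomotopy (K : Type) [Field K] (piv : Finset α → α) :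
    Chain K α →ₗ[K] Chain K α :=
  Finsupp.lsum K fun s => LinearMap.toSpanSingleton K _ (wedge K (piv s) (single s 1))

theorem coneHomotopy_single (piv : Finset α → α) (s : Finset α) :
    coneHomotopy K piv (single s 1) = wedge K (piv s) (single s 1) := by
  simp [coneHomotopy]

theorem wedge_single_mem_chainsOn {v : α} {s : Finset α} (h : insert v s ∈ A) :
    wedge K v (single s 1) ∈ chainsOn K A :=
  wedge_mem_chainsOn (A := {s}) (fun _ hs _ => hs ▸ h) (Finsupp.single_mem_supported K 1 rfl)

theorem bdS_coneHomotopy_add_sub_single (piv : Finset α → α) (s : Finset α) :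
    bdS K (coneHomotopy K piv (single s 1)) + coneHomotopy K piv (bdS K (single s 1)) -
      single s 1 = ∑ v ∈ s, faceSign K v s • (wedge K (piv (s.erase v)) (single (s.erase v) 1) -
        wedge K (piv s) (single (s.erase v) 1)) := by
  simp only [coneHomotopy_single, bdS_wedge, bdS_single, map_sum, map_smul, smul_sub,
    Finset.sum_sub_distrib]
  abel

/-- A pivot that only depends on the part of a face inside `L` makes the homotopy formula fail only
by faces with fewer vertices in `L`. -/
theorem bdS_coneHomotopy_add_sub_mem (hA : IsLowerSet A) {L : Finset α} {piv : Finset α → α}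
    (hpiv : ∀ s ∈ A, piv (s ∩ L) ∉ L ∧ insert (piv (s ∩ L)) s ∈ A) {k : ℕ} {x : Chain K α}
    (hx : x ∈ chainsOn K {s | s ∈ A ∧ (s ∩ L).card ≤ k}) :
    bdS K (coneHomotopy K (fun s => piv (s ∩ L)) x) +
      coneHomotopy K (fun s => piv (s ∩ L)) (bdS K x) - x ∈
        chainsOn K {s | s ∈ A ∧ (s ∩ L).card < k} := by
  set h := coneHomotopy K (fun s => piv (s ∩ L)) with h_def
  refine map_mem_of_forall_single (f := bdS K ∘ₗ h + h ∘ₗ bdS K - LinearMap.id)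
    (fun s hs => ?_) hx
  rw [LinearMap.sub_apply, LinearMap.add_apply, LinearMap.comp_apply, LinearMap.comp_apply,
    LinearMap.id_apply, h_def, bdS_coneHomotopy_add_sub_single]
  refine Submodule.sum_mem _ fun v hv => Submodule.smul_mem _ _ ?_
  by_cases hvL : v ∈ L
  · have hlt : ((s.erase v) ∩ L).card < k := by
      rw [Finset.erase_inter]
      exact (Finset.card_erase_lt_of_mem (Finset.mem_inter.2 ⟨hv, hvL⟩)).trans_le hs.2
    have hmem : ∀ w ∉ L, insert w (s.erase v) ∈ A →
        insert w (s.erase v) ∈ {s | s ∈ A ∧ (s ∩ L).card < k} := fun w hwL hw =>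
      Set.mem_ofPred.2 ⟨hw, by rwa [Finset.insert_inter_of_notMem hwL]⟩
    obtain ⟨hpL, hpA⟩ := hpiv s hs.1
    obtain ⟨hqL, hqA⟩ := hpiv (s.erase v) (hA (s.erase_subset v) hs.1)
    exact sub_mem (wedge_single_mem_chainsOn (hmem _ hqL hqA)) (wedge_single_mem_chainsOn
      (hmem _ hpL (hA (Finset.insert_subset_insert _ (s.erase_subset v)) hpA)))
  · rw [Finset.erase_inter, Finset.erase_eq_of_notMem (by simp [hvL]), sub_self]
    exact zero_mem _

theorem acyclic_of_insert_mem (hA : IsLowerSet A) (L : Finset α) (piv : Finset α → α)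
    (hpiv : ∀ s ∈ A, piv (s ∩ L) ∉ L ∧ insert (piv (s ∩ L)) s ∈ A) : Acyclic K A := by
  have hcone : ∀ x ∈ chainsOn K A, coneHomotopy K (fun s => piv (s ∩ L)) x ∈ chainsOn K A :=
    fun x => map_mem_of_forall_single fun s hs => by
      rw [coneHomotopy_single]
      exact wedge_single_mem_chainsOn (hpiv s hs).2
  have hbelow : ∀ k, ∀ x ∈ chainsOn K {s | s ∈ A ∧ (s ∩ L).card < k}, bdS K x = 0 →
      ∃ y ∈ chainsOn K A, bdS K y = x := by
    intro k
    induction k with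
    | zero => exact fun x hx _ => ⟨0, zero_mem _, by simpa [chainsOn, eq_comm] using hx⟩
    | succ k ih =>
      intro x hx hbd
      have hlow := bdS_coneHomotopy_add_sub_mem hA hpiv (k := k)
        (chainsOn_mono (fun s hs => Set.mem_ofPred.2 ⟨hs.1, Nat.lt_succ_iff.1 hs.2⟩) hx)
      rw [hbd, map_zero, add_zero] at hlow
      obtain ⟨y, hy, hyx⟩ := ih _ hlow (by rw [map_sub, bdS_bdS, hbd, sub_zero])
      exact ⟨_ - y, sub_mem (hcone x (chainsOn_mono Set.inter_subset_left hx)) hy, by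
        rw [map_sub, hyx, sub_sub_cancel]⟩
  exact fun x hx => hbelow (L.card + 1) x (chainsOn_mono (fun s hs => Set.mem_ofPred.2 ⟨hs,
    Nat.lt_succ_iff.2 (Finset.card_le_card Finset.inter_subset_right)⟩) hx)

end Acyclic

section VertexMaps

variable {K α X : Type} [Field K] [LinearOrder α] [LinearOrder X] (f : α ↪o X)

/-- The map on chains induced by an order embedding of the vertices. -/
noncomputable def mapVertices (K : Type) [Field K] (f : α ↪o X) : Chain K α →ₗ[K] Chain K X :=
  Finsupp.lmapDomain K K (Finset.map f.toEmbedding)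

theorem mapVertices_single (s : Finset α) :
    mapVertices K f (single s 1) = single (s.map f.toEmbedding) 1 :=
  Finsupp.mapDomain_single

theorem faceSign_map (v : α) (s : Finset α) :
    faceSign K (f v) (s.map f.toEmbedding) = faceSign K v s := by
  simp [faceSign, Finset.filter_map]

theorem bdS_mapVertices (x : Chain K α) :
    bdS K (mapVertices K f x) = mapVertices K f (bdS K x) := by
  suffices bdS K ∘ₗ mapVertices K f = mapVertices K f ∘ₗ bdS K from LinearMap.congr_fun this x
  refine linearMap_ext_single fun s => ?_
  simp only [LinearMap.comp_apply, mapVertices_single, bdS_single, map_sum, map_smul,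
    Finset.sum_map]
  refine Finset.sum_congr rfl fun v _ => ?_
  rw [Finset.map_erase]
  exact congrArg (· • _) (faceSign_map f v s)

theorem map_mapVertices_chainsOn (A : Set (Finset α)) :
    (chainsOn K A).map (mapVertices K f) = chainsOn K (Finset.map f.toEmbedding '' A) :=
  Finsupp.lmapDomain_supported K K _ A

theorem mapVertices_mem_chainsOn_image_iff {A : Set (Finset α)} {x : Chain K α} :
    mapVertices K f x ∈ chainsOn K (Finset.map f.toEmbedding '' A) ↔ x ∈ chainsOn K A := by
  rw [← map_mapVertices_chainsOn]
  exact Function.Injective.mem_set_image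
    (Finsupp.mapDomain_injective (Finset.map_injective f.toEmbedding))

theorem hasRelHomology_image_map_iff {Γ A : Set (Finset α)} {p : ℕ} :
    HasRelHomology K (Finset.map f.toEmbedding '' Γ) (Finset.map f.toEmbedding '' A) p ↔
      HasRelHomology K Γ A p := by
  have hcard : {s | s ∈ Finset.map f.toEmbedding '' Γ ∧ s.card = p} =
      Finset.map f.toEmbedding '' {s | s ∈ Γ ∧ s.card = p} := by
    ext s
    constructor
    · rintro ⟨⟨s, hs, rfl⟩, hp⟩
      exact ⟨s, ⟨hs, by simpa using hp⟩, rfl⟩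
    · rintro ⟨s, ⟨hs, hp⟩, rfl⟩
      exact ⟨⟨s, hs, rfl⟩, by simpa using hp⟩
  simp only [HasRelHomology, hcard, ← map_mapVertices_chainsOn f {s | s ∈ Γ ∧ s.card = p},
    ← map_mapVertices_chainsOn f Γ, Submodule.mem_map, exists_exists_and_eq_and,
    forall_exists_index, and_imp, forall_apply_eq_imp_iff₂, bdS_mapVertices, ← map_sub,
    mapVertices_mem_chainsOn_image_iff]

end VertexMaps

section Dowker

variable {α β X Y : Type}

/-- The complex on `S` whose faces are the sets of elements related by `R` to a common element
of `T`. -/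
def dowkerComplex (R : α → β → Prop) (S : Finset α) (T : Finset β) : Set (Finset α) :=
  {s | s ⊆ S ∧ ∃ x ∈ T, ∀ k ∈ s, R k x}

theorem isLowerSet_dowkerComplex (R : α → β → Prop) (S : Finset α) (T : Finset β) :
    IsLowerSet (dowkerComplex R S T) := fun _ _ hts ⟨hsS, x, hx, hR⟩ =>
  ⟨hts.trans hsS, x, hx, fun k hk => hR k (hts hk)⟩

theorem image_map_Iic (f : α ↪ X) (S : Finset α) :
    Finset.map f '' Set.Iic S = Set.Iic (S.map f) := by
  ext s
  simp [Finset.subset_map_iff, eq_comm]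

theorem image_map_dowkerComplex {R : α → β → Prop} {R' : X → Y → Prop} (f : α ↪ X) (g : β ↪ Y)
    (hR : ∀ k x, R' (f k) (g x) ↔ R k x) (S : Finset α) (T : Finset β) :
    Finset.map f '' dowkerComplex R S T = dowkerComplex R' (S.map f) (T.map g) := by
  ext s
  constructor
  · rintro ⟨s, ⟨hsS, x, hx, hsx⟩, rfl⟩
    exact ⟨Finset.map_subset_map.2 hsS, g x, Finset.mem_map_of_mem g hx, fun u hu => by
      obtain ⟨k, hk, rfl⟩ := Finset.mem_map.1 hu
      exact (hR k x).2 (hsx k hk)⟩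
  · rintro ⟨hsS, v, hv, hsv⟩
    obtain ⟨s, hs, rfl⟩ := Finset.subset_map_iff.1 hsS
    obtain ⟨x, hx, rfl⟩ := Finset.mem_map.1 hv
    exact ⟨s, ⟨hs, x, hx, fun k hk => (hR k x).1 (hsv _ (Finset.mem_map_of_mem f hk))⟩, rfl⟩

variable [DecidableEq X]

/-- The complex on the disjoint union of `P` and `Q` whose faces are the unions of a subset of `P`
and a subset of `Q` all of whose elements are pairwise related. -/
def dowkerJoin (R : X → X → Prop) (P Q : Finset X) : Set (Finset X) :=
  {s | s ⊆ P ∪ Q ∧ ∀ k ∈ s, k ∈ P → ∀ x ∈ s, x ∈ Q → R k x}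

theorem isLowerSet_dowkerJoin (R : X → X → Prop) (P Q : Finset X) :
    IsLowerSet (dowkerJoin R P Q) := fun _ _ hts ⟨hs, hR⟩ =>
  ⟨hts.trans hs, fun k hk hkP x hx => hR k (hts hk) hkP x (hts hx)⟩

theorem dowkerJoin_flip (R : X → X → Prop) (P Q : Finset X) :
    dowkerJoin (flip R) Q P = dowkerJoin R P Q := by
  ext s
  exact and_congr (by rw [Finset.union_comm])
    ⟨fun h k hk hkP x hx hxQ => h x hx hxQ k hk hkP, fun h x hx hxQ k hk hkP => h k hk hkP x hx hxQ⟩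

/-- The subcomplex of the faces of the join whose part in `P` is a face of the Dowker complex.
It is acyclic because these parts can be coned off with vertices of `Q`. -/
def dowkerJoinCone (R : X → X → Prop) (P Q : Finset X) : Set (Finset X) :=
  {s | s ∈ dowkerJoin R P Q ∧ ∃ x ∈ Q, ∀ k ∈ s, k ∈ P → R k x}

theorem isLowerSet_dowkerJoinCone (R : X → X → Prop) (P Q : Finset X) :
    IsLowerSet (dowkerJoinCone R P Q) := fun _ _ hts ⟨hs, x, hx, hR⟩ =>
  Set.mem_ofPred.2 ⟨isLowerSet_dowkerJoin R P Q hts hs, x, hx, fun k hk => hR k (hts hk)⟩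

theorem dowkerJoin_sdiff_dowkerJoinCone {P Q : Finset X} (hPQ : Disjoint P Q)
    (R : X → X → Prop) :
    dowkerJoin R P Q \ dowkerJoinCone R P Q = Set.Iic P \ dowkerComplex R P Q := by
  ext s
  constructor
  · rintro ⟨hs, hsC⟩
    have hsP : s ⊆ P := fun v hv => (Finset.mem_union.1 (hs.1 hv)).resolve_right fun hvQ =>
      hsC (Set.mem_ofPred.2 ⟨hs, v, hvQ, fun k hk hkP => hs.2 k hk hkP v hv hvQ⟩)
    exact ⟨hsP, fun ⟨_, x, hx, hR⟩ => hsC (Set.mem_ofPred.2 ⟨hs, x, hx, fun k hk _ => hR k hk⟩)⟩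
  · rintro ⟨hsP, hsD⟩
    exact ⟨⟨hsP.trans Finset.subset_union_left, fun k _ _ x hx hxQ =>
      (Finset.disjoint_left.1 hPQ (hsP hx) hxQ).elim⟩,
      fun ⟨_, x, hx, hR⟩ => hsD ⟨hsP, x, hx, fun k hk => hR k hk (hsP hk)⟩⟩

end Dowker

section DowkerDuality

variable {K X : Type} [Field K] [LinearOrder X]

theorem acyclic_dowkerJoinCone {P Q : Finset X} (hPQ : Disjoint P Q) (R : X → X → Prop) :
    Acyclic K (dowkerJoinCone R P Q) := by
  rcases (dowkerJoinCone R P Q).eq_empty_or_nonempty with hempty | ⟨-, -, x₀, -⟩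
  · exact fun z hz _ => ⟨0, zero_mem _, by simpa [hempty, eq_comm] using hz⟩
  have hpivot : ∀ u : Finset X, ∃ x, (∃ y ∈ Q, ∀ k ∈ u, R k y) →
      x ∈ Q ∧ ∀ k ∈ u, R k x := fun u => by
    by_cases h : ∃ y ∈ Q, ∀ k ∈ u, R k y
    · exact h.imp fun x hx _ => hx
    · exact ⟨x₀, fun h' => (h h').elim⟩
  choose piv hpiv using hpivot
  refine acyclic_of_insert_mem (isLowerSet_dowkerJoinCone R P Q) P piv fun s ⟨hs, x, hx, hR⟩ => ?_
  obtain ⟨hvQ, hRv⟩ := hpiv (s ∩ P) ⟨x, hx, fun k hk =>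
    hR k (Finset.mem_inter.1 hk).1 (Finset.mem_inter.1 hk).2⟩
  set v := piv (s ∩ P)
  have hvP : v ∉ P := Finset.disjoint_right.1 hPQ hvQ
  have hRs : ∀ k ∈ insert v s, k ∈ P → k ∈ s ∧ R k v := fun k hk hkP => by
    have hks := Finset.mem_of_mem_insert_of_ne hk fun h => hvP (h ▸ hkP)
    exact ⟨hks, hRv k (Finset.mem_inter.2 ⟨hks, hkP⟩)⟩
  refine ⟨hvP, Set.mem_ofPred.2 ⟨⟨Finset.insert_subset (Finset.mem_union_right P hvQ) hs.1,
    fun k hk hkP y hy hyQ => ?_⟩, v, hvQ, fun k hk hkP => (hRs k hk hkP).2⟩⟩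
  rcases Finset.mem_insert.1 hy with rfl | hys
  · exact (hRs k hk hkP).2
  · exact hs.2 k (hRs k hk hkP).1 hkP y hys hyQ

theorem hasRelHomology_dowkerComplex_iff_dowkerJoin {P Q : Finset X} (hPQ : Disjoint P Q)
    (R : X → X → Prop) {p : ℕ} :
    HasRelHomology K (Set.Iic P) (dowkerComplex R P Q) p ↔
      HasRelHomology K (dowkerJoin R P Q) ∅ p := by
  rw [← (acyclic_dowkerJoinCone hPQ R).hasRelHomology_iff Set.inter_subset_left]
  exact hasRelHomology_congr_of_sdiff_eq (isLowerSet_Iic P) (isLowerSet_dowkerComplex R P Q)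
    (isLowerSet_dowkerJoin R P Q) (isLowerSet_dowkerJoinCone R P Q)
    (dowkerJoin_sdiff_dowkerJoinCone hPQ R).symm

theorem dowker_duality {α β : Type} [LinearOrder α] [LinearOrder β]
    (R : α → β → Prop) (S : Finset α) (T : Finset β) {p : ℕ} :
    HasRelHomology K (Set.Iic T) (dowkerComplex (flip R) T S) p ↔
      HasRelHomology K (Set.Iic S) (dowkerComplex R S T) p := by
  let f : α ↪o α ⊕ₗ β := OrderEmbedding.ofStrictMono Sum.inlₗ Sum.Lex.inl_strictMono
  let g : β ↪o α ⊕ₗ β := OrderEmbedding.ofStrictMono Sum.inrₗ Sum.Lex.inr_strictMono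
  let R' := Relation.Map R f g
  have hR' : ∀ k x, R' (f k) (g x) ↔ R k x := fun k x =>
    Relation.map_apply_apply f.injective g.injective R k x
  have hdisj : Disjoint (S.map f.toEmbedding) (T.map g.toEmbedding) := by
    simp [Finset.disjoint_left, f, g]
  rw [← hasRelHomology_image_map_iff f, ← hasRelHomology_image_map_iff g, image_map_Iic,
    image_map_Iic, image_map_dowkerComplex f.toEmbedding g.toEmbedding hR',
    image_map_dowkerComplex (R := flip R) (R' := flip R') g.toEmbedding f.toEmbedding
      fun x k => hR' k x,
    hasRelHomology_dowkerComplex_iff_dowkerJoin hdisj,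
    hasRelHomology_dowkerComplex_iff_dowkerJoin hdisj.symm, dowkerJoin_flip]

end DowkerDuality

section Taylor

variable {K : Type} [Field K] {n r : ℕ} {g : Fin r → Fin n → ℕ}

theorem bdT_single (S : Finset (Fin r)) : bdT K g (single S 1) =
    ∑ k ∈ S, if mlcm g (S.erase k) = mlcm g S then
      faceSign K k S • single (S.erase k) (1 : K) else 0 := by
  simp [bdT, faceSign]

theorem strand_eq_chainsOn (p j : ℕ) :
    strand K g p j = chainsOn K {S | S.card = p ∧ ∑ x, mlcm g S x = j} := by
  rw [strand, chainsOn, Finsupp.supported_eq_span_single]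
  congr 1
  ext c
  exact exists_congr fun S => by
    rw [← and_assoc, eq_comm (a := c)]
    rfl

theorem torRank_ne_zero_iff {p j : ℕ} : torRank K g p j ≠ 0 ↔
    ∃ z ∈ strand K g p j, bdT K g z = 0 ∧ z ∉ (strand K g (p + 1) j).map (bdT K g) := by
  set cycles := strand K g p j ⊓ LinearMap.ker (bdT K g)
  set boundaries := (strand K g (p + 1) j).map (bdT K g)
  have hle : torRank K g p j = 0 ↔ cycles ≤ boundaries := by
    rw [torRank, Nat.sub_eq_zero_iff_le]
    exact ⟨fun h => inf_eq_right.1 (Submodule.eq_of_le_of_finrank_le inf_le_right h),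
      fun h => (congrArg (fun N : Submodule K _ => Module.finrank K N) (inf_eq_right.2 h)).ge⟩
  rw [Ne, hle, SetLike.not_le_iff_exists]
  simp only [cycles, Submodule.mem_inf, LinearMap.mem_ker, and_assoc]

theorem bdT_mem_chainsOn {A B : Set (Finset (Fin r))}
    (h : ∀ S ∈ A, ∀ k ∈ S, mlcm g (S.erase k) = mlcm g S → S.erase k ∈ B) {x : Chain K (Fin r)}
    (hx : x ∈ chainsOn K A) : bdT K g x ∈ chainsOn K B := by
  refine map_mem_of_forall_single (fun S hS => ?_) hx
  rw [bdT_single]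
  refine Submodule.sum_mem _ fun k hk => ?_
  split_ifs with hlcm
  · exact smul_single_mem_chainsOn (h S hS k hk hlcm) _
  · exact zero_mem _

theorem bdT_proj {A B : Set (Finset (Fin r))}
    (h : ∀ S, ∀ k ∈ S, mlcm g (S.erase k) = mlcm g S → (S.erase k ∈ B ↔ S ∈ A))
    (x : Chain K (Fin r)) : bdT K g (proj K A x) = proj K B (bdT K g x) :=
  map_proj (fun _ hS => bdT_mem_chainsOn (A := A) (fun T hT k hk hlcm => (h T k hk hlcm).2 hT)
      (Finsupp.single_mem_supported K 1 hS))
    (fun _ hS => bdT_mem_chainsOn (A := Aᶜ) (fun T hT k hk hlcm => mt (h T k hk hlcm).1 hT)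
      (Finsupp.single_mem_supported K 1 hS)) x

theorem bdT_proj_card (p : ℕ) (x : Chain K (Fin r)) :
    bdT K g (proj K {S | S.card = p + 1} x) = proj K {S | S.card = p} (bdT K g x) :=
  bdT_proj (fun S k hk _ => by simp [← Finset.card_erase_add_one hk]) x

theorem bdT_proj_mlcm (m : Fin n → ℕ) (x : Chain K (Fin r)) :
    bdT K g (proj K {S | mlcm g S = m} x) = proj K {S | mlcm g S = m} (bdT K g x) :=
  bdT_proj (fun S k _ hlcm => by simp [hlcm]) x

theorem proj_mlcm_bdS {m : Fin n → ℕ} {x : Chain K (Fin r)}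
    (hx : x ∈ chainsOn K {S | mlcm g S = m}) :
    proj K {S | mlcm g S = m} (bdS K x) = bdT K g x := by
  have hbdT : bdT K g x ∈ chainsOn K {S | mlcm g S = m} :=
    bdT_mem_chainsOn (fun S hS k _ hlcm => Set.mem_ofPred.2 (hlcm.trans hS)) hx
  rw [← proj_eq_self hbdT, eq_comm, ← sub_eq_zero, ← map_sub]
  refine proj_eq_zero_of_disjoint (disjoint_compl_left (a := {S | mlcm g S = m})) ?_
  refine map_mem_of_forall_single (f := bdT K g - bdS K) (fun S hS => ?_) hx
  rw [LinearMap.sub_apply, bdT_single, bdS_single, ← Finset.sum_sub_distrib]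
  refine Submodule.sum_mem _ fun k _ => ?_
  split_ifs with hlcm
  · rw [sub_self]
    exact zero_mem _
  · rw [zero_sub]
    have hSk : S.erase k ∈ {S | mlcm g S = m}ᶜ := fun h => hlcm (h.trans hS.symm)
    exact neg_mem (smul_single_mem_chainsOn hSk _)

theorem mlcm_mono (g : Fin r → Fin n → ℕ) : Monotone (mlcm g) :=
  fun _ _ hST _ => Finset.sup_mono hST

theorem hasRelHomology_mlcm_iff {m : Fin n → ℕ} {p : ℕ} :
    HasRelHomology K (mlcm g ⁻¹' Set.Iic m) (mlcm g ⁻¹' Set.Iio m) p ↔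
      ∃ z ∈ chainsOn K {S | mlcm g S = m ∧ S.card = p}, bdT K g z = 0 ∧
        ∀ y ∈ chainsOn K {S | mlcm g S = m}, bdT K g y ≠ z := by
  have hsdiff : mlcm g ⁻¹' Set.Iic m \ mlcm g ⁻¹' Set.Iio m = {S | mlcm g S = m} := by
    rw [← Set.preimage_sdiff, Set.Iic_sdiff_Iio_same]
    rfl
  rw [hasRelHomology_iff_proj ((isLowerSet_Iic m).preimage (mlcm_mono g))
    ((isLowerSet_Iio m).preimage (mlcm_mono g)), hsdiff]
  refine exists_congr fun z => and_congr_right fun hz => and_congr ?_ (forall₂_congr fun y hy => ?_)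
  · rw [proj_mlcm_bdS (chainsOn_mono Set.inter_subset_left hz)]
  · rw [proj_mlcm_bdS hy]

theorem sum_proj_fiber {α ι : Type} [DecidableEq ι] (f : Finset α → ι) (x : Chain K α) :
    ∑ m ∈ x.support.image f, proj K {s | f s = m} x = x := by
  ext s
  rw [Finsupp.finsetSum_apply]
  by_cases hs : s ∈ x.support
  · rw [Finset.sum_eq_single_of_mem (f s) (Finset.mem_image_of_mem f hs) fun m _ hm =>
      proj_apply_of_notMem (fun h => hm h.symm) x]
    exact proj_apply_of_mem (A := {t | f t = f s}) rfl x
  · rw [Finsupp.notMem_support_iff.1 hs]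
    refine Finset.sum_eq_zero fun m _ => mem_chainsOn.1 (chainsOn_mono Set.inter_subset_left
      (proj_mem_chainsOn_of_mem (Γ := x.support) _ (fun _ h => h))) s hs

theorem torRank_ne_zero_iff_hasRelHomology {p j : ℕ} : torRank K g p j ≠ 0 ↔
    ∃ m : Fin n → ℕ, ∑ x, m x = j ∧
      HasRelHomology K (mlcm g ⁻¹' Set.Iic m) (mlcm g ⁻¹' Set.Iio m) p := by
  simp only [torRank_ne_zero_iff, hasRelHomology_mlcm_iff, strand_eq_chainsOn]
  constructor
  · rintro ⟨z, hz, hbd, hno⟩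
    obtain ⟨m, hm, hzm⟩ : ∃ m ∈ z.support.image (mlcm g), proj K {S | mlcm g S = m} z ∉
        (chainsOn K {S | S.card = p + 1 ∧ ∑ x, mlcm g S x = j}).map (bdT K g) := by
      by_contra! h
      exact hno (sum_proj_fiber (mlcm g) z ▸ Submodule.sum_mem _ h)
    obtain ⟨S, hS, rfl⟩ := Finset.mem_image.1 hm
    have hcard : proj K {T | mlcm g T = mlcm g S} z ∈
        chainsOn K {T | mlcm g T = mlcm g S ∧ T.card = p} :=
      chainsOn_mono (fun T hT => Set.mem_ofPred.2 ⟨hT.2, hT.1.1⟩)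
        (proj_mem_chainsOn_of_mem {T | mlcm g T = mlcm g S} hz)
    refine ⟨mlcm g S, (hz hS).2, _, hcard, by rw [bdT_proj_mlcm, hbd, map_zero], fun y hy hyz => ?_⟩
    refine hzm ⟨proj K {T | T.card = p + 1} y, chainsOn_mono (fun T hT => Set.mem_ofPred.2
      ⟨hT.2, hT.1 ▸ (hz hS).2⟩) (proj_mem_chainsOn_of_mem {T | T.card = p + 1} hy), ?_⟩
    rw [bdT_proj_card, hyz]
    exact proj_eq_self (chainsOn_mono Set.inter_subset_right hcard)
  · rintro ⟨m, rfl, z, hz, hbd, hno⟩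
    refine ⟨z, chainsOn_mono (fun S hS => Set.mem_ofPred.2 ⟨hS.2, by rw [hS.1]⟩) hz, hbd, ?_⟩
    rintro ⟨y, -, hyz⟩
    refine hno _ (proj_mem_chainsOn {S | mlcm g S = m} y) ?_
    rw [bdT_proj_mlcm, hyz]
    exact proj_eq_self (chainsOn_mono Set.inter_subset_left hz)

end Taylor

section EdgeIdeal

variable {n : ℕ}

/-- The two endpoints of the `k`-th edge in the enumeration underlying `edgeGens G`. -/
noncomputable def edgeVertices (G : SimpleGraph (Fin n)) (k : Fin (edgeFins G).card) :
    Finset (Fin n) :=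
  ((edgeFins G).equivFin.symm k : Sym2 (Fin n)).toFinset

/-- The exponent vector of the squarefree monomial with support `W`. -/
def squarefreeExponent (W : Finset (Fin n)) : Fin n → ℕ := fun x => if x ∈ W then 1 else 0

theorem squarefreeExponent_le_iff {U W : Finset (Fin n)} :
    squarefreeExponent U ≤ squarefreeExponent W ↔ U ⊆ W := by
  refine ⟨fun h x hx => ?_, fun h x => ?_⟩
  · by_contra hxW
    simpa [squarefreeExponent, hx, hxW] using h x
  · by_cases hx : x ∈ U
    · simp [squarefreeExponent, hx, h hx]
    · simp [squarefreeExponent, hx]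

theorem squarefreeExponent_lt_iff {U W : Finset (Fin n)} :
    squarefreeExponent U < squarefreeExponent W ↔ U ⊂ W := by
  rw [lt_iff_le_not_ge, squarefreeExponent_le_iff, squarefreeExponent_le_iff,
    ssubset_iff_subset_not_subset]

theorem sum_squarefreeExponent (W : Finset (Fin n)) : ∑ x, squarefreeExponent W x = W.card := by
  simp [squarefreeExponent]

theorem mlcm_edgeGens (G : SimpleGraph (Fin n)) (S : Finset (Fin (edgeFins G).card)) :
    mlcm (edgeGens G) S = squarefreeExponent (S.biUnion (edgeVertices G)) := by
  have hgen : ∀ k, edgeGens G k = squarefreeExponent (edgeVertices G k) := fun k => by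
    funext x
    simp only [edgeGens, squarefreeExponent, edgeVertices, Sym2.mem_toFinset]
  refine le_antisymm (fun x => Finset.sup_le fun k hk => ?_) fun x => ?_
  · rw [hgen]
    exact squarefreeExponent_le_iff.2 (Finset.subset_biUnion_of_mem _ hk) x
  · by_cases hx : x ∈ S.biUnion (edgeVertices G)
    · obtain ⟨k, hk, hxk⟩ := Finset.mem_biUnion.1 hx
      rw [squarefreeExponent, if_pos hx]
      exact Finset.le_sup_of_le hk (by rw [hgen, squarefreeExponent, if_pos hxk])
    · rw [squarefreeExponent, if_neg hx]
      exact Nat.zero_le _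

theorem notMem_indepComplex_iff {G : SimpleGraph (Fin n)} {A : Finset (Fin n)} :
    A ∉ indepComplex G ↔ ∃ k, edgeVertices G k ⊆ A := by
  have hedge : (∃ k, edgeVertices G k ⊆ A) ↔ ∃ e ∈ edgeFins G, ∀ x ∈ e, x ∈ A := by
    simp only [edgeVertices, Finset.subset_iff, Sym2.mem_toFinset]
    rw [(edgeFins G).equivFin.symm.exists_congr_left]
    simp
  rw [hedge, Sym2.exists]
  simp only [indepComplex, Set.mem_ofPred_eq, edgeFins, SimpleGraph.mem_edgeFinset,
    SimpleGraph.mem_edgeSet, Sym2.mem_iff, forall_eq_or_imp, forall_eq]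
  push Not
  exact ⟨fun ⟨x, hx, y, hy, h⟩ => ⟨x, y, h, hx, hy⟩, fun ⟨x, y, h, hx, hy⟩ => ⟨x, hx, y, hy, h⟩⟩

end EdgeIdeal
section Hochster
variable {K : Type} [Field K] {n : ℕ} {G : SimpleGraph (Fin n)}

theorem preimage_mlcm_edgeGens_Iic (W : Finset (Fin n)) :
    mlcm (edgeGens G) ⁻¹' Set.Iic (squarefreeExponent W) =
      Set.Iic (Finset.univ.filter fun k => edgeVertices G k ⊆ W) := by
  ext S
  simp [mlcm_edgeGens, squarefreeExponent_le_iff, Finset.subset_iff (s₁ := S)]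

theorem preimage_mlcm_edgeGens_Iio (W : Finset (Fin n)) :
    mlcm (edgeGens G) ⁻¹' Set.Iio (squarefreeExponent W) =
      dowkerComplex (fun k x => x ∉ edgeVertices G k)
        (Finset.univ.filter fun k => edgeVertices G k ⊆ W) W := by
  ext S
  simp [mlcm_edgeGens, squarefreeExponent_lt_iff, dowkerComplex, ssubset_iff_subset_not_subset,
    Finset.subset_iff (s₁ := S), Finset.not_subset]

theorem dowkerComplex_flip_edgeVertices (W : Finset (Fin n)) :
    dowkerComplex (flip fun k x => x ∉ edgeVertices G k) W
      (Finset.univ.filter fun k => edgeVertices G k ⊆ W) = alexanderDual (indepComplex G) W := by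
  ext F
  refine and_congr_right fun _ => ?_
  simp only [notMem_indepComplex_iff, Finset.subset_sdiff, Finset.disjoint_right,
    Finset.mem_filter, Finset.mem_univ, true_and, flip]

theorem hasRelHomology_edgeGens_iff_hasTor {W : Finset (Fin n)} {p : ℕ} :
    HasRelHomology K (mlcm (edgeGens G) ⁻¹' Set.Iic (squarefreeExponent W))
      (mlcm (edgeGens G) ⁻¹' Set.Iio (squarefreeExponent W)) p ↔
        HasTor K (indepComplex G) W p := by
  rw [preimage_mlcm_edgeGens_Iic, preimage_mlcm_edgeGens_Iio, ← dowker_duality,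
    dowkerComplex_flip_edgeVertices, HasTor]

theorem gBetti_ne_zero_iff {i j : ℕ} : gBetti K G i j ≠ 0 ↔
    ∃ W : Finset (Fin n), W.card = j ∧ HasTor K (indepComplex G) W (i + 1) := by
  rw [gBetti, betti, torRank_ne_zero_iff_hasRelHomology]
  constructor
  · rintro ⟨m, rfl, h⟩
    obtain ⟨S, hle, hlt⟩ := h.nonempty_sdiff
    obtain rfl : mlcm (edgeGens G) S = m := eq_of_le_of_not_lt hle hlt
    rw [mlcm_edgeGens] at h ⊢
    exact ⟨_, (sum_squarefreeExponent _).symm, hasRelHomology_edgeGens_iff_hasTor.1 h⟩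
  · rintro ⟨W, rfl, h⟩
    exact ⟨_, sum_squarefreeExponent W, hasRelHomology_edgeGens_iff_hasTor.2 h⟩

end Hochster

section DualCochains

variable {K β : Type} [Field K] [LinearOrder β] {W : Finset β} {x y z : β} {N : Chain K β}

theorem wedge_apply_of_mem {v : β} {s : Finset β} (hv : v ∈ s) (N : Chain K β) :
    wedge K v N s = faceSign K v s * N (s.erase v) := by
  suffices lapply s ∘ₗ wedge K v = faceSign K v s • lapply (s.erase v) from
    LinearMap.congr_fun this N
  refine linearMap_ext_single fun q => ?_
  simp only [LinearMap.comp_apply, lapply_apply, LinearMap.smul_apply, smul_eq_mul]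
  by_cases hvq : v ∈ q
  · have hq : s.erase v ≠ q := by
      rintro rfl
      exact Finset.notMem_erase v s hvq
    rw [wedge_single_of_mem hvq, single_eq_of_ne hq, mul_zero, Finsupp.zero_apply]
  · rw [wedge_single_of_notMem hvq, Finsupp.smul_apply, smul_eq_mul]
    rcases eq_or_ne q (s.erase v) with rfl | hq
    · rw [Finset.insert_erase hv, faceSign_erase hv, if_neg (lt_irrefl v)]
      simp
    · rw [single_eq_of_ne hq.symm, single_eq_of_ne, mul_zero, mul_zero]
      rintro rfl
      exact hq (Finset.erase_insert hvq).symm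

theorem wedge_apply_of_notMem {v : β} {s : Finset β} (hv : v ∉ s) (N : Chain K β) :
    wedge K v N s = 0 := by
  have hN : wedge K v N ∈ chainsOn K {q | v ∈ q} :=
    wedge_mem_chainsOn (A := Set.univ) (fun q _ _ => Finset.mem_insert_self v q) (by simp)
  exact mem_chainsOn.1 hN s hv

theorem wedge_apply_eq_zero (h : N (W.erase x) = 0) : wedge K x N W = 0 := by
  by_cases hx : x ∈ W
  · rw [wedge_apply_of_mem hx, h, mul_zero]
  · exact wedge_apply_of_notMem hx N

theorem wedge_wedge_apply_eq_zero (h : N (W \ {x, y}) = 0) : wedge K x (wedge K y N) W = 0 := by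
  rw [Finset.sdiff_insert, Finset.sdiff_singleton_eq_erase, Finset.erase_right_comm] at h
  exact wedge_apply_eq_zero (wedge_apply_eq_zero h)

theorem wedge_wedge_wedge_apply_eq_zero (h : N (W \ {x, y, z}) = 0) :
    wedge K x (wedge K y (wedge K z N)) W = 0 := by
  rw [Finset.sdiff_insert, ← Finset.erase_sdiff_comm] at h
  exact wedge_apply_eq_zero (wedge_wedge_apply_eq_zero h)

theorem apply_erase_eq_zero_of_wedge (hx : x ∈ W) (h : wedge K x N W = 0) : N (W.erase x) = 0 := by
  rw [wedge_apply_of_mem hx] at h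
  exact (mul_eq_zero.1 h).resolve_left (faceSign_ne_zero x W)

theorem apply_sdiff_pair_eq_zero_of_wedge (hx : x ∈ W) (hy : y ∈ W) (hxy : x ≠ y)
    (h : wedge K x (wedge K y N) W = 0) : N (W \ {x, y}) = 0 := by
  rw [Finset.sdiff_insert, Finset.sdiff_singleton_eq_erase, Finset.erase_right_comm]
  exact apply_erase_eq_zero_of_wedge (Finset.mem_erase.2 ⟨hxy.symm, hy⟩)
    (apply_erase_eq_zero_of_wedge hx h)

theorem wedge_bdS (v : β) (N : Chain K β) : wedge K v (bdS K N) = N - bdS K (wedge K v N) := by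
  rw [bdS_wedge, sub_sub_cancel]

theorem wedge_mem_chainsOn_Iic (hx : x ∈ W) (hN : N ∈ chainsOn K (Set.Iic W)) :
    wedge K x N ∈ chainsOn K (Set.Iic W) :=
  wedge_mem_chainsOn (fun _ hs _ => Finset.insert_subset hx hs) hN

theorem bdS_apply_eq_zero (hN : N ∈ chainsOn K (Set.Iic W)) : bdS K N W = 0 := by
  have hW : bdS K N ∈ chainsOn K {s | s ≠ W} := bdS_mem_chainsOn (fun s hs v hv => by
    rintro rfl
    exact Finset.notMem_erase v s (hs hv)) hN
  exact mem_chainsOn.1 hW W (by simp)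

theorem wedge_bdS_apply (hN : N ∈ chainsOn K (Set.Iic W)) (hx : x ∈ W) :
    wedge K x (bdS K N) W = N W := by
  rw [wedge_bdS, Finsupp.sub_apply, bdS_apply_eq_zero (wedge_mem_chainsOn_Iic hx hN), sub_zero]

theorem wedge_wedge_bdS_apply (hN : N ∈ chainsOn K (Set.Iic W)) (hx : x ∈ W) (hy : y ∈ W) :
    wedge K x (wedge K y (bdS K N)) W = wedge K x N W - wedge K y N W := by
  rw [wedge_bdS, map_sub, Finsupp.sub_apply, wedge_bdS_apply (wedge_mem_chainsOn_Iic hy hN) hx]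

theorem wedge_wedge_wedge_bdS_apply (hN : N ∈ chainsOn K (Set.Iic W)) (hx : x ∈ W) (hy : y ∈ W)
    (hz : z ∈ W) : wedge K x (wedge K y (wedge K z (bdS K N))) W =
      wedge K x (wedge K y N) W - wedge K x (wedge K z N) W + wedge K y (wedge K z N) W := by
  rw [wedge_bdS, map_sub, map_sub, Finsupp.sub_apply,
    wedge_wedge_bdS_apply (wedge_mem_chainsOn_Iic hz hN) hx hy, sub_sub_eq_add_sub,
    sub_add_eq_add_sub]

end DualCochains

section LowDegreeCocycles

variable {K β : Type} [Field K] [LinearOrder β] {Δ : Set (Finset β)} {W : Finset β} {p : ℕ}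

theorem apply_eq_zero_of_mem_chainsOn_alexanderDual {N : Chain K β} {F : Finset β}
    (hN : N ∈ chainsOn K (alexanderDual Δ W)) (hFW : F ⊆ W) (hF : F ∈ Δ) : N (W \ F) = 0 :=
  mem_chainsOn.1 hN _ fun h => h.2 (by rwa [Finset.sdiff_sdiff_eq_self hFW])

theorem mem_chainsOn_alexanderDual {N : Chain K β}
    (hN : N ∈ chainsOn K {s | s ∈ Set.Iic W ∧ s.card = p})
    (h : ∀ F ⊆ W, F ∈ Δ → F.card + p = W.card → N (W \ F) = 0) :
    N ∈ chainsOn K (alexanderDual Δ W) := by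
  refine mem_chainsOn.2 fun s hs => ?_
  by_cases hsW : s ∈ Set.Iic W ∧ s.card = p
  · have hF : W \ s ∈ Δ := not_not.1 fun hF => hs ⟨hsW.1, hF⟩
    have hcard := hsW.2 ▸ Finset.card_sdiff_add_card_eq_card hsW.1
    simpa only [Finset.sdiff_sdiff_eq_self hsW.1] using h _ Finset.sdiff_subset hF hcard
  · exact mem_chainsOn.1 hN s hsW

theorem bdS_mem_chainsOn_Iic_card {y : Chain K β}
    (hy : y ∈ chainsOn K {s | s ∈ Set.Iic W ∧ s.card = p + 1}) :
    bdS K y ∈ chainsOn K {s | s ∈ Set.Iic W ∧ s.card = p} :=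
  bdS_mem_chainsOn (fun s hs v hv => Set.mem_ofPred.2 ⟨(s.erase_subset v).trans hs.1, by
    rw [Finset.card_erase_of_mem hv, hs.2, Nat.add_sub_cancel]⟩) hy

theorem not_hasTor_card {x : β} (hxW : x ∈ W) (hx : {x} ∈ Δ) : ¬HasTor K Δ W W.card := by
  rintro ⟨Y, hY, hDY, hno⟩
  have hYW : Y ∈ chainsOn K (Set.Iic W) := chainsOn_mono Set.inter_subset_left hY
  have hYtop : Y W = 0 := by
    rw [← wedge_bdS_apply hYW hxW]
    refine wedge_apply_eq_zero ?_
    rw [← Finset.sdiff_singleton_eq_erase]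
    exact apply_eq_zero_of_mem_chainsOn_alexanderDual hDY (Finset.singleton_subset_iff.2 hxW) hx
  refine hno 0 (zero_mem _) ?_
  rw [map_zero, sub_zero]
  refine mem_chainsOn_alexanderDual hY fun F hFW _ hcard => ?_
  obtain rfl : F = ∅ := Finset.card_eq_zero.1 (by omega)
  rwa [Finset.sdiff_empty]

theorem HasTor.exists_locallyConstant (h : HasTor K Δ W p) (hp : p + 1 = W.card) :
    ∃ f : β → K, (∀ x ∈ W, ∀ y ∈ W, {x, y} ∈ Δ → f x = f y) ∧ ¬∃ κ, ∀ x ∈ W, f x = κ := by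
  obtain ⟨Y, hY, hDY, hno⟩ := h
  have hYW : Y ∈ chainsOn K (Set.Iic W) := chainsOn_mono Set.inter_subset_left hY
  refine ⟨fun x => wedge K x Y W, fun x hx y hy hxy => ?_, fun ⟨κ, hκ⟩ => ?_⟩
  · rw [← sub_eq_zero, ← wedge_wedge_bdS_apply hYW hx hy]
    exact wedge_wedge_apply_eq_zero (apply_eq_zero_of_mem_chainsOn_alexanderDual hDY
      (Finset.insert_subset hx (Finset.singleton_subset_iff.2 hy)) hxy)
  · have htop : κ • single W (1 : K) ∈ chainsOn K {s | s ∈ Set.Iic W ∧ s.card = p + 1} :=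
      smul_single_mem_chainsOn (Set.mem_ofPred.2 ⟨le_refl W, hp.symm⟩) κ
    have htop' := chainsOn_mono Set.inter_subset_left htop
    refine hno _ htop' (mem_chainsOn_alexanderDual
      (sub_mem hY (bdS_mem_chainsOn_Iic_card htop)) fun F hFW _ hcard => ?_)
    obtain ⟨x, rfl⟩ := Finset.card_eq_one.1 (by omega : F.card = 1)
    have hx := Finset.singleton_subset_iff.1 hFW
    rw [Finset.sdiff_singleton_eq_erase]
    refine apply_erase_eq_zero_of_wedge hx ?_
    rw [map_sub, Finsupp.sub_apply, wedge_bdS_apply htop' hx, show wedge K x Y W = κ from hκ x hx]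
    simp

theorem exists_wedge_apply_eq (W : Finset β) (f : β → K) :
    ∃ U ∈ chainsOn K {s | s ∈ Set.Iic W ∧ s.card + 1 = W.card}, ∀ x ∈ W, wedge K x U W = f x := by
  refine ⟨∑ x ∈ W, f x • contract K x (single W 1), sum_mem fun x hx => ?_, fun x hx => ?_⟩
  · rw [contract_single_of_mem hx, smul_smul]
    exact smul_single_mem_chainsOn (s := W.erase x) (A := {s | s ∈ Set.Iic W ∧ s.card + 1 = W.card})
      ⟨W.erase_subset x, Finset.card_erase_add_one hx⟩ _
  · rw [map_sum, Finsupp.finsetSum_apply, Finset.sum_eq_single_of_mem x hx]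
    · rw [map_smul, Finsupp.smul_apply, contract_single_of_mem hx, map_smul, Finsupp.smul_apply,
        wedge_apply_of_mem hx, single_eq_same, mul_one, smul_eq_mul, smul_eq_mul,
        faceSign_mul_self, mul_one]
    · intro y hy hyx
      rw [map_smul, contract_single_of_mem hy, map_smul,
        wedge_single_of_mem (Finset.mem_erase.2 ⟨hyx.symm, hx⟩), smul_zero, smul_zero,
        Finsupp.zero_apply]

theorem HasTor.exists_cocycle (h : HasTor K Δ W p) (hp : p + 2 = W.card) :
    ∃ g : β → β → K, (∀ x y, g x y = -g y x) ∧
      (∀ x ∈ W, ∀ y ∈ W, ∀ z ∈ W, {x, y, z} ∈ Δ → g x y - g x z + g y z = 0) ∧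
      ¬∃ f : β → K, ∀ x ∈ W, ∀ y ∈ W, x ≠ y → {x, y} ∈ Δ → g x y = f x - f y := by
  obtain ⟨Y, hY, hDY, hno⟩ := h
  have hYW : Y ∈ chainsOn K (Set.Iic W) := chainsOn_mono Set.inter_subset_left hY
  refine ⟨fun x y => wedge K x (wedge K y Y) W, fun x y => ?_, fun x hx y hy z hz hxyz => ?_,
    fun ⟨f, hf⟩ => ?_⟩
  · simp only [wedge_wedge (K := K) x y, Finsupp.neg_apply]
  · rw [← wedge_wedge_wedge_bdS_apply hYW hx hy hz]
    exact wedge_wedge_wedge_apply_eq_zero (apply_eq_zero_of_mem_chainsOn_alexanderDual hDY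
      (by simp [Finset.insert_subset_iff, hx, hy, hz]) hxyz)
  · obtain ⟨U, hU, hUf⟩ := exists_wedge_apply_eq W f
    have hU' : U ∈ chainsOn K {s | s ∈ Set.Iic W ∧ s.card = p + 1} :=
      chainsOn_mono (fun s (hs : s ∈ Set.Iic W ∧ _) =>
        Set.mem_ofPred.2 ⟨hs.1, by omega⟩) hU
    have hUW : U ∈ chainsOn K (Set.Iic W) := chainsOn_mono Set.inter_subset_left hU
    refine hno U hUW (mem_chainsOn_alexanderDual
      (sub_mem hY (bdS_mem_chainsOn_Iic_card hU')) fun F hFW hF hcard => ?_)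
    obtain ⟨x, y, hxy, rfl⟩ := Finset.card_eq_two.1 (by omega : F.card = 2)
    have hx : x ∈ W := hFW (by simp)
    have hy : y ∈ W := hFW (by simp)
    refine apply_sdiff_pair_eq_zero_of_wedge hx hy hxy ?_
    rw [map_sub, map_sub, Finsupp.sub_apply, wedge_wedge_bdS_apply hUW hx hy, hUf x hx, hUf y hy,
      ← hf x hx y hy hxy hF, sub_self]

end LowDegreeCocycles

section CyclesThroughFaces

variable {K β : Type} [Field K] [LinearOrder β] {Δ : Set (Finset β)} {W T F : Finset β}

/-- There is a cycle of the restriction of `Δ` to `W` in which the face `F` has a nonzero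
coefficient. As in `HasTor`, faces are replaced by their complements in `W`, so that the cycle
becomes a functional that vanishes on boundaries and on the Alexander dual. -/
def HasCycleThrough (K : Type) [Field K] (Δ : Set (Finset β)) (W F : Finset β) : Prop :=
  F ⊆ W ∧ ∃ ζ : Chain K β →ₗ[K] K, (∀ x ∈ chainsOn K (Set.Iic W), ζ (bdS K x) = 0) ∧
    (∀ Q ∈ alexanderDual Δ W, ζ (single Q 1) = 0) ∧ ζ (single (W \ F) 1) ≠ 0

theorem HasCycleThrough.mem (h : HasCycleThrough K Δ W F) : F ∈ Δ := by
  obtain ⟨hFW, ζ, -, hdual, hF⟩ := h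
  by_contra hΔ
  exact hF (hdual _ ⟨Finset.sdiff_subset, by rwa [Finset.sdiff_sdiff_eq_self hFW]⟩)

/-- A boundary has zero coefficient at a facet. -/
theorem HasCycleThrough.hasTor (h : HasCycleThrough K Δ W F)
    (hfacet : ∀ w ∈ W, w ∉ F → insert w F ∉ Δ) : HasTor K Δ W (W.card - F.card) := by
  obtain ⟨hFW, ζ, hbd, hdual, hF⟩ := h
  have hζ := apply_eq_zero_of_mem_chainsOn hdual
  refine ⟨single (W \ F) 1, single_mem_supported K 1 (Set.mem_ofPred.2
    ⟨Finset.sdiff_subset, Finset.card_sdiff_of_subset hFW⟩), ?_, fun y hy hzy => hF ?_⟩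
  · rw [bdS_single]
    refine Submodule.sum_mem _ fun w hw => smul_single_mem_chainsOn ?_ _
    obtain ⟨hwW, hwF⟩ := Finset.mem_sdiff.1 hw
    refine ⟨(Finset.erase_subset _ _).trans Finset.sdiff_subset, ?_⟩
    rw [Finset.sdiff_erase hwW, Finset.sdiff_sdiff_eq_self hFW]
    exact hfacet w hwW hwF
  · rw [← hζ _ hzy, map_sub, hbd y hy, sub_zero]

theorem hasCycleThrough_empty (h : ∅ ∈ Δ) : HasCycleThrough K Δ ∅ ∅ := by
  refine ⟨subset_rfl, lapply ∅, fun x hx => bdS_apply_eq_zero hx, fun Q hQ => ?_, by simp⟩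
  obtain rfl := Finset.subset_empty.1 hQ.1
  exact absurd h hQ.2

theorem bdS_proj_Iic_of_partialBoundary_eq_zero (hWT : Disjoint W T) {y : Chain K β}
    (hy : y ∈ chainsOn K (Set.Iic (W ∪ T))) (hTy : partialBoundary K T y = 0) :
    bdS K (proj K (Set.Iic W) y) = proj K (Set.Iic W) (bdS K y) := by
  have hsum : partialBoundary K (W ∪ T) y = partialBoundary K W y := by
    rw [partialBoundary_apply, Finset.sum_union hWT, ← partialBoundary_apply,
      ← partialBoundary_apply, hTy, add_zero]
  rw [bdS_eq_partialBoundary hy, hsum, bdS_eq_partialBoundary (proj_mem_chainsOn _ _)]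
  refine map_proj (fun s hs => partialBoundary_mem_chainsOn
    (fun s hs v _ _ => (s.erase_subset v).trans hs) (single_mem_supported K 1 hs))
    (fun s hs => partialBoundary_mem_chainsOn (A := (Set.Iic W)ᶜ) (B := (Set.Iic W)ᶜ)
      (fun s hs v hv _ h => hs ((Finset.subset_insert_iff.2 h).trans
        (Finset.insert_subset hv subset_rfl))) (single_mem_supported K 1 hs)) y

theorem proj_partialBoundary_single_mem_chainsOn_alexanderDual (hWT : Disjoint W T)
    (hΔ : ∀ v ∈ T, ∀ A ⊆ W, A ∈ Δ → A ∪ T.erase v ∈ Δ) {Q : Finset β}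
    (hQ : Q ∈ alexanderDual Δ (W ∪ T)) :
    proj K (Set.Iic W) (partialBoundary K T (single Q 1)) ∈ chainsOn K (alexanderDual Δ W) := by
  rw [partialBoundary_apply, map_sum]
  refine Submodule.sum_mem _ fun w hw => ?_
  by_cases hwQ : w ∈ Q
  · rw [contract_single_of_mem hwQ, map_smul]
    refine Submodule.smul_mem _ _ ?_
    by_cases hQW : Q.erase w ∈ Set.Iic W
    · rw [proj_eq_self (single_mem_supported K 1 hQW)]
      refine single_mem_supported K 1 ⟨hQW, fun hmem => hQ.2 ?_⟩
      convert hΔ w hw _ Finset.sdiff_subset hmem using 1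
      have hdisj := Finset.disjoint_left.1 hWT
      have hsub : ∀ u ∈ Q, u ≠ w → u ∈ W := fun u hu huw => hQW (Finset.mem_erase.2 ⟨huw, hu⟩)
      ext u
      simp only [Finset.mem_sdiff, Finset.mem_union, Finset.mem_erase]
      grind [hsub u]
    · rw [proj_eq_zero_of_disjoint (A := {Q.erase w})
        (Set.disjoint_singleton_left.2 hQW) (single_mem_supported K 1 rfl)]
      exact Submodule.zero_mem _
  · rw [contract_single_of_notMem hwQ, map_zero]
    exact Submodule.zero_mem _

theorem partialBoundary_single_insert {v : β} (hv : v ∈ T) (hWT : Disjoint W T) :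
    partialBoundary K T (single (insert v W) 1) =
      faceSign K v (insert v W) • single W 1 := by
  rw [partialBoundary_apply, Finset.sum_eq_single_of_mem v hv,
    contract_single_of_mem (Finset.mem_insert_self v _),
    Finset.erase_insert (Finset.disjoint_right.1 hWT hv)]
  intro w hw hwv
  refine contract_single_of_notMem fun h => ?_
  exact (Finset.mem_insert.1 h).elim hwv (Finset.disjoint_right.1 hWT hw)

theorem HasCycleThrough.join_boundary (h : HasCycleThrough K Δ W F) (hWT : Disjoint W T)
    (hΔ : ∀ v ∈ T, ∀ A ⊆ W, A ∈ Δ → A ∪ T.erase v ∈ Δ) {v : β} (hv : v ∈ T) :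
    HasCycleThrough K Δ (W ∪ T) (F ∪ T.erase v) := by
  obtain ⟨hFW, ζ, hbd, hdual, hF⟩ := h
  have hζ := apply_eq_zero_of_mem_chainsOn hdual
  have hdisj := Finset.disjoint_left.1 hWT
  refine ⟨Finset.union_subset_union hFW (T.erase_subset v),
    ζ ∘ₗ proj K (Set.Iic W) ∘ₗ partialBoundary K T, fun x hx => ?_,
    fun Q hQ => hζ _ (proj_partialBoundary_single_mem_chainsOn_alexanderDual hWT hΔ hQ), ?_⟩
  · have hmem : partialBoundary K T x ∈ chainsOn K (Set.Iic (W ∪ T)) :=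
      partialBoundary_mem_chainsOn (fun s hs w _ _ => (s.erase_subset w).trans hs) hx
    have hcomm := bdS_proj_Iic_of_partialBoundary_eq_zero hWT hmem
      (partialBoundary_partialBoundary_self T x)
    rw [bdS_partialBoundary, map_neg, ← neg_eq_iff_eq_neg] at hcomm
    rw [LinearMap.comp_apply, LinearMap.comp_apply, ← hcomm, map_neg,
      hbd _ (proj_mem_chainsOn _ _), neg_zero]
  · have hcompl : (W ∪ T) \ (F ∪ T.erase v) = insert v (W \ F) := by
      ext u
      simp only [Finset.mem_sdiff, Finset.mem_union, Finset.mem_erase, Finset.mem_insert]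
      grind
    rw [hcompl, LinearMap.comp_apply, LinearMap.comp_apply,
      partialBoundary_single_insert hv (hWT.mono_left Finset.sdiff_subset), map_smul, map_smul,
      proj_eq_self (single_mem_supported K 1 Finset.sdiff_subset), smul_eq_mul]
    exact mul_ne_zero (faceSign_ne_zero v _) hF

theorem HasCycleThrough.mono (h : HasCycleThrough K Δ W F) (hWT : W ⊆ T) :
    HasCycleThrough K Δ T F := by
  rw [← Finset.union_sdiff_of_subset hWT]
  induction T \ W using Finset.induction with
  | empty => rwa [Finset.union_empty]
  | insert v S _ ih =>
    by_cases hv : v ∈ W ∪ S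
    · rwa [Finset.union_insert, Finset.insert_eq_self.2 hv]
    · have := ih.join_boundary (T := {v}) (Finset.disjoint_singleton_right.2 hv)
        (fun u hu A _ hA => by simpa [Finset.mem_singleton.1 hu] using hA)
        (Finset.mem_singleton_self v)
      rwa [Finset.erase_singleton, Finset.union_empty, Finset.union_assoc, Finset.union_comm S,
        ← Finset.insert_eq] at this

theorem hasCycleThrough_of_closed_walk {c : ℕ → β} {m : ℕ} (hW : ∀ i ≤ m, c i ∈ W)
    (hclosed : c m = c 0) (hedge : ∀ i < m, {c i, c (i + 1)} ∈ Δ) (hm : 0 < m) (hne : c 0 ≠ c 1)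
    (honce : ∀ i < m, 0 < i → ({c i, c (i + 1)} : Finset β) ≠ {c 0, c 1}) :
    HasCycleThrough K Δ W {c 0, c 1} := by
  have hpair : ∀ i < m, {c i, c (i + 1)} ⊆ W := fun i hi =>
    Finset.insert_subset (hW i hi.le) (Finset.singleton_subset_iff.2 (hW (i + 1) hi))
  have hedge_zero : ∀ i < m, ∀ Q, Q ≠ W \ {c i, c (i + 1)} →
      wedge K (c i) (wedge K (c (i + 1)) (single Q 1)) W = 0 := fun i _ Q hQ =>
    wedge_wedge_apply_eq_zero (single_eq_of_ne hQ.symm)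
  refine ⟨hpair 0 hm, ∑ i ∈ Finset.range m, lapply W ∘ₗ wedge K (c i) ∘ₗ wedge K (c (i + 1)),
    fun x hx => ?_, fun Q hQ => ?_, ?_⟩
  · rw [LinearMap.sum_apply]
    calc ∑ i ∈ Finset.range m, wedge K (c i) (wedge K (c (i + 1)) (bdS K x)) W
        = ∑ i ∈ Finset.range m, (wedge K (c i) x W - wedge K (c (i + 1)) x W) :=
          Finset.sum_congr rfl fun i hi => wedge_wedge_bdS_apply hx
            (hW i (Finset.mem_range.1 hi).le) (hW (i + 1) (Finset.mem_range.1 hi))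
      _ = 0 := by
        rw [Finset.sum_range_sub' fun i => wedge K (c i) x W, hclosed, sub_self]
  · rw [LinearMap.sum_apply]
    refine Finset.sum_eq_zero fun i hi => hedge_zero i (Finset.mem_range.1 hi) Q ?_
    rintro rfl
    refine hQ.2 ?_
    rw [Finset.sdiff_sdiff_eq_self (hpair i (Finset.mem_range.1 hi))]
    exact hedge i (Finset.mem_range.1 hi)
  · rw [LinearMap.sum_apply, Finset.sum_eq_single_of_mem 0 (Finset.mem_range.2 hm)]
    · intro h
      have := apply_sdiff_pair_eq_zero_of_wedge (hW 0 hm.le) (hW 1 hm) hne h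
      simp at this
    · intro i hi hi0
      have him := Finset.mem_range.1 hi
      refine hedge_zero i him _ fun h => honce i him (Nat.pos_of_ne_zero hi0) ?_
      rw [← Finset.sdiff_sdiff_eq_self (hpair i him), ← h, Finset.sdiff_sdiff_eq_self (hpair 0 hm)]

end CyclesThroughFaces

section LinkAndDeletion

variable {K β : Type} [Field K] [LinearOrder β] {Δ Γ : Set (Finset β)} {W : Finset β} {v : β}
  {p q : ℕ}

/-- The link of the vertex `v` in `Δ`. Its members are allowed to contain `v`; only its restrictions
to vertex sets avoiding `v` are used. -/
def link (Δ : Set (Finset β)) (v : β) : Set (Finset β) :=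
  {F | insert v F ∈ Δ}

theorem isLowerSet_link (hΔ : IsLowerSet Δ) (v : β) : IsLowerSet (link Δ v) :=
  fun _ _ hts hs => hΔ (Finset.insert_subset_insert v hts) hs

theorem alexanderDual_link (hv : v ∈ W) :
    alexanderDual (link Δ v) (W.erase v) = alexanderDual Δ W ∩ Set.Iic (W.erase v) := by
  ext F
  have hcompl : F ⊆ W.erase v → insert v (W.erase v \ F) = W \ F := fun hF => by
    rw [Finset.erase_sdiff_comm, Finset.insert_erase]
    exact Finset.mem_sdiff.2 ⟨hv, fun h => Finset.notMem_erase v W (hF h)⟩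
  constructor
  · rintro ⟨hF, hlink⟩
    exact ⟨⟨hF.trans (W.erase_subset v), fun h => hlink (by rwa [link, Set.mem_ofPred, hcompl hF])⟩,
      hF⟩
  · rintro ⟨⟨-, hΔ⟩, hF⟩
    exact ⟨hF, fun h => hΔ (by rwa [link, Set.mem_ofPred, hcompl hF] at h)⟩

theorem erase_mem_alexanderDual {F : Finset β} (hF : F ∈ alexanderDual Δ W) (hv : v ∈ F) :
    F.erase v ∈ alexanderDual Δ (W.erase v) := by
  refine ⟨Finset.erase_subset_erase v hF.1, ?_⟩
  rw [← Finset.erase_sdiff_distrib,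
    Finset.erase_eq_of_notMem fun h => (Finset.mem_sdiff.1 h).2 hv]
  exact hF.2

theorem insert_mem_alexanderDual {F : Finset β} (hF : F ∈ alexanderDual Δ (W.erase v))
    (hv : v ∈ W) : insert v F ∈ alexanderDual Δ W := by
  refine ⟨Finset.insert_subset hv (hF.1.trans (W.erase_subset v)), ?_⟩
  rw [Finset.sdiff_insert, ← Finset.erase_sdiff_comm]
  exact hF.2

theorem hasTor_link_of_sub_bdS_mem (hΔ : IsLowerSet Δ) (hv : v ∈ W) {y u : Chain K β}
    (hy : y ∈ chainsOn K {s | s ∈ Set.Iic W ∧ s.card = p})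
    (hbd : bdS K y ∈ chainsOn K (alexanderDual Δ W))
    (hno : ∀ x ∈ chainsOn K (Set.Iic W), y - bdS K x ∉ chainsOn K (alexanderDual Δ W))
    (hu : u ∈ chainsOn K {s | s ∈ Set.Iic (W.erase v) ∧ s.card = p})
    (hyu : contract K v y - bdS K u ∈ chainsOn K (alexanderDual Δ (W.erase v))) :
    HasTor K (link Δ v) (W.erase v) p := by
  have hwedge : wedge K v (contract K v y - bdS K u) ∈ chainsOn K (alexanderDual Δ W) :=
    wedge_mem_chainsOn (fun s hs _ => insert_mem_alexanderDual hs hv) hyu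
  have hz : y - wedge K v (contract K v y - bdS K u) + bdS K (wedge K v u) =
      contract K v (wedge K v y) + u := by
    rw [bdS_wedge, map_sub]
    nth_rewrite 1 [← wedge_contract_add_contract_wedge v y]
    abel
  have hz_mem : contract K v (wedge K v y) + u ∈
      chainsOn K {s | s ∈ Set.Iic (W.erase v) ∧ s.card = p} := by
    refine add_mem (contract_mem_chainsOn (A := {s | s ∈ Set.Iic W ∧ s.card = p + 1})
      (fun s hs hvs => Set.mem_ofPred.2 ⟨Finset.erase_subset_erase v hs.1, ?_⟩)
      (wedge_mem_chainsOn (fun s hs hvs => Set.mem_ofPred.2 ⟨Finset.insert_subset hv hs.1, ?_⟩)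
        hy)) hu
    · rw [Finset.card_erase_of_mem hvs, hs.2, Nat.add_sub_cancel]
    · rw [Finset.card_insert_of_notMem hvs, hs.2]
  rw [HasTor, alexanderDual_link hv]
  refine ⟨_, hz_mem, mem_chainsOn_inter ?_ (bdS_mem_chainsOn_of_isLowerSet (isLowerSet_Iic _)
      (chainsOn_mono Set.inter_subset_left hz_mem)), fun x hx hzx => ?_⟩
  · rw [← hz, map_add, map_sub, bdS_bdS, add_zero]
    exact sub_mem hbd (bdS_mem_chainsOn_of_isLowerSet (isLowerSet_alexanderDual hΔ W) hwedge)
  · have herase := Finset.erase_subset v W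
    refine hno (x - wedge K v u) (sub_mem (chainsOn_mono (Set.Iic_subset_Iic.2 herase) hx)
      (wedge_mem_chainsOn (fun s hs _ => Finset.insert_subset hv (hs.1.trans herase)) hu)) ?_
    have hmem := add_mem (chainsOn_mono Set.inter_subset_left hzx) hwedge
    rw [← hz] at hmem
    convert hmem using 1
    rw [map_sub]
    abel

/-- This is the long exact sequence of the link and the deletion of `v`: if the part of the cycle
containing `v` is a boundary, then the cycle is homologous to one that avoids `v`. -/
theorem HasTor.erase_or_link (hΔ : IsLowerSet Δ) (hv : v ∈ W) (h : HasTor K Δ W (p + 1)) :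
    HasTor K Δ (W.erase v) p ∨ HasTor K (link Δ v) (W.erase v) (p + 1) := by
  obtain ⟨y, hy, hbd, hno⟩ := h
  have hcontract : contract K v y ∈ chainsOn K {s | s ∈ Set.Iic (W.erase v) ∧ s.card = p} :=
    contract_mem_chainsOn (fun s hs hvs => Set.mem_ofPred.2 ⟨Finset.erase_subset_erase v hs.1, by
      rw [Finset.card_erase_of_mem hvs, hs.2, Nat.add_sub_cancel]⟩) hy
  by_cases hbounds : ∃ u ∈ chainsOn K (Set.Iic (W.erase v)),
      contract K v y - bdS K u ∈ chainsOn K (alexanderDual Δ (W.erase v))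
  · obtain ⟨u', hu', hyu'⟩ := hbounds
    obtain ⟨u, hu, hyu⟩ := exists_card_eq_add_one_of_sub_bdS_mem
      (chainsOn_mono Set.inter_subset_right hcontract) hu' hyu'
    exact Or.inr (hasTor_link_of_sub_bdS_mem hΔ hv hy hbd hno hu hyu)
  · push Not at hbounds
    refine Or.inl ⟨_, hcontract, ?_, hbounds⟩
    rw [bdS_contract]
    exact neg_mem (contract_mem_chainsOn (fun s hs hvs => erase_mem_alexanderDual hs hvs) hbd)

theorem not_hasTor_of_cone (hv : v ∈ W) (hcone : ∀ F ⊆ W, F ∈ Δ → insert v F ∈ Δ) :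
    ¬HasTor K Δ W p := by
  rintro ⟨z, hz, hbd, hno⟩
  refine hno (wedge K v z) (wedge_mem_chainsOn (fun s hs _ => ?_) hz) ?_
  · exact Finset.insert_subset hv hs.1
  rw [bdS_wedge, sub_sub_cancel]
  refine wedge_mem_chainsOn (A := alexanderDual Δ W) (B := alexanderDual Δ W)
    (fun s hs hvs => ⟨Finset.insert_subset hv hs.1, fun h => hs.2 ?_⟩) hbd
  have := hcone _ Finset.sdiff_subset h
  rwa [Finset.sdiff_insert, Finset.insert_erase (Finset.mem_sdiff.2 ⟨hv, hvs⟩)] at this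

theorem not_hasTor_of_empty_notMem (hΔ : IsLowerSet Δ) (h : ∅ ∉ Δ) : ¬HasTor K Δ W p := by
  rintro ⟨z, hz, -, hno⟩
  refine hno 0 (zero_mem _) ?_
  rw [map_zero, sub_zero]
  exact chainsOn_mono (fun s hs => Set.mem_ofPred.2
    ⟨hs.1, fun hmem => h (hΔ (Finset.empty_subset _) hmem)⟩) hz

theorem HasTor.ne_zero (hΔ : IsLowerSet Δ) (h : HasTor K Δ W p) (hW : W.Nonempty) : p ≠ 0 := by
  rintro rfl
  obtain ⟨w, hw⟩ := hW
  by_cases hWΔ : W ∈ Δ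
  · exact not_hasTor_of_cone hw (fun F hF _ => hΔ (Finset.insert_subset hw hF) hWΔ) h
  · obtain ⟨z, hz, -, hno⟩ := h
    refine hno 0 (zero_mem _) ?_
    rw [map_zero, sub_zero]
    refine chainsOn_mono (fun s hs => Set.mem_ofPred.2 ⟨hs.1, ?_⟩) hz
    rwa [Finset.card_eq_zero.1 hs.2, Finset.sdiff_empty]

theorem HasTor.sdiff (hΔ : IsLowerSet Δ) (h : HasTor K Δ W p) {O : Finset β} (hOW : O ⊆ W)
    (hO : ∀ o ∈ O, {o} ∉ Δ) : ∃ q, q + O.card = p ∧ HasTor K Δ (W \ O) q := by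
  induction O using Finset.induction with
  | empty => exact ⟨p, rfl, by rwa [Finset.sdiff_empty]⟩
  | insert o O ho ih =>
    obtain ⟨q, hq, hTor⟩ := ih (fun x hx => hOW (Finset.mem_insert_of_mem hx))
      fun x hx => hO x (Finset.mem_insert_of_mem hx)
    have hoW : o ∈ W \ O := Finset.mem_sdiff.2 ⟨hOW (Finset.mem_insert_self o O), ho⟩
    obtain ⟨q, rfl⟩ := Nat.exists_eq_succ_of_ne_zero (hTor.ne_zero hΔ ⟨o, hoW⟩)
    refine ⟨q, by rw [Finset.card_insert_of_notMem ho]; omega, ?_⟩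
    rw [Finset.sdiff_insert]
    exact (hTor.erase_or_link hΔ hoW).resolve_right
      (not_hasTor_of_empty_notMem (isLowerSet_link hΔ o) (hO o (Finset.mem_insert_self o O)))

theorem HasTor.congr (h : HasTor K Δ W p) (hΔΓ : ∀ F ⊆ W, F ∈ Δ ↔ F ∈ Γ) :
    HasTor K Γ W p := by
  have : alexanderDual Δ W = alexanderDual Γ W :=
    Set.ext fun F => and_congr_right fun _ => not_congr (hΔΓ _ Finset.sdiff_subset)
  rwa [HasTor, ← this]

theorem HasAlmostMaximalIndex.card_eq {G : SimpleGraph β} {t : ℕ} (hG : HasAlmostMaximalIndex K G t)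
    (h : HasTor K (indepComplex G) W (t + 1)) (hW : t + 3 ≤ W.card) : W.card = t + 3 := by
  classical
  by_contra hne
  obtain ⟨v, hv⟩ := Finset.card_pos.1 (show 0 < W.card by omega)
  have hcard := Finset.card_erase_of_mem hv
  set O := (W.erase v).filter (G.Adj v)
  have hO : O ⊆ W.erase v := Finset.filter_subset _ _
  have hlink := (h.erase_or_link (isLowerSet_indepComplex G) hv).resolve_left fun h' =>
    (hG.lt_of_nonlinear _ _ h' (by omega)).false
  obtain ⟨q, hq, hpeel⟩ := hlink.sdiff (isLowerSet_link (isLowerSet_indepComplex G) v) hO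
    fun o ho h => pair_mem_indepComplex_iff.1 h (Finset.mem_filter.1 ho).2
  have hTor : HasTor K (indepComplex G) (W.erase v \ O) q := hpeel.congr fun F hF => by
    refine insert_mem_indepComplex_iff.trans (and_iff_right fun y hy hvy => ?_)
    have := Finset.mem_sdiff.1 (hF hy)
    exact this.2 (Finset.mem_filter.2 ⟨this.1, hvy⟩)
  have hsdiff := Finset.card_sdiff_add_card_eq_card hO
  have hlt := hG.lt_of_nonlinear _ _ hTor (by omega)
  have hempty : O = ∅ := Finset.card_eq_zero.1 (by omega)
  refine not_hasTor_of_cone hv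
    (fun F hF hFΔ => insert_mem_indepComplex_iff.2 ⟨fun y hy hvy => ?_, hFΔ⟩) h
  exact Finset.filter_eq_empty_iff.1 hempty (Finset.mem_erase.2 ⟨hvy.ne', hF hy⟩) hvy

end LinkAndDeletion

section Holonomy

variable {V A : Type} [AddCommGroup A] {H : SimpleGraph V} {g : V → V → A}

/-- The sum of the edge function `g` along a walk. -/
def holonomy (g : V → V → A) {u v : V} (p : H.Walk u v) : A :=
  (p.darts.map fun d => g d.fst d.snd).sum

theorem holonomy_nil (u : V) : holonomy g (SimpleGraph.Walk.nil : H.Walk u u) = 0 := rfl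

theorem holonomy_cons {u v w : V} (h : H.Adj u v) (p : H.Walk v w) :
    holonomy g (.cons h p) = g u v + holonomy g p := by
  simp [holonomy]

theorem holonomy_append {u v w : V} (p : H.Walk u v) (q : H.Walk v w) :
    holonomy g (p.append q) = holonomy g p + holonomy g q := by
  simp [holonomy]

theorem holonomy_reverse (hg : ∀ x y, g x y = -g y x) {u v : V} (p : H.Walk u v) :
    holonomy g p.reverse = -holonomy g p := by
  induction p with
  | nil => simp [holonomy_nil]
  | cons h p ih =>
    rw [SimpleGraph.Walk.reverse_cons, holonomy_append, ih, holonomy_cons, holonomy_cons,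
      holonomy_nil, hg]
    abel

theorem exists_potential (hg : ∀ x y, g x y = -g y x)
    (hclosed : ∀ u (p : H.Walk u u), holonomy g p = 0) :
    ∃ f : V → A, ∀ x y, H.Adj x y → g x y = f x - f y := by
  set root : V → V := fun x => (H.connectedComponentMk x).out
  have hroot : ∀ x, H.Reachable x (root x) := fun x =>
    SimpleGraph.ConnectedComponent.exact (H.connectedComponentMk x).out_eq.symm
  set walkToRoot : ∀ x, H.Walk x (root x) := fun x => (hroot x).some
  have hwalk : ∀ x v (p : H.Walk x v), v = root x → holonomy g p = holonomy g (walkToRoot x) := by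
    rintro x _ p rfl
    rw [← sub_eq_zero, sub_eq_add_neg, ← holonomy_reverse hg, ← holonomy_append]
    exact hclosed x _
  refine ⟨fun x => holonomy g (walkToRoot x), fun x y hxy => ?_⟩
  have hroot_eq : root y = root x :=
    congrArg Quot.out (SimpleGraph.ConnectedComponent.sound hxy.reachable.symm)
  rw [eq_sub_iff_add_eq, ← holonomy_cons hxy]
  exact hwalk x _ _ hroot_eq

/-- A cycle `c 0, c 1, …, c m = c 0` of length `m` without chords. Indexing by `ℕ` instead of
`ZMod m` keeps arcs of the cycle intervals; values beyond `m` are irrelevant. -/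
structure IsInducedCycle (H : SimpleGraph V) (m : ℕ) (c : ℕ → V) : Prop where
  closed : c m = c 0
  ne : ∀ i j, i < j → j < m → c i ≠ c j
  adj_iff : ∀ i j, i < j → j < m → (H.Adj (c i) (c j) ↔ j = i + 1 ∨ i = 0 ∧ j + 1 = m)

theorem exists_walk_segments {u v : V} (p : H.Walk u v) {i j : ℕ} (hij : i ≤ j)
    (hj : j ≤ p.length) :
    ∃ (a : H.Walk u (p.getVert i)) (b : H.Walk (p.getVert i) (p.getVert j))
      (d : H.Walk (p.getVert j) v), a.length = i ∧ b.length = j - i ∧ d.length = p.length - j ∧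
      p = a.append (b.append d) := by
  have hvert : (p.drop i).getVert (j - i) = p.getVert j := by
    rw [SimpleGraph.Walk.drop_getVert, Nat.add_sub_cancel' hij]
  refine ⟨p.take i, ((p.drop i).take (j - i)).copy rfl hvert,
    ((p.drop i).drop (j - i)).copy hvert rfl, ?_, ?_, ?_, ?_⟩
  · rw [SimpleGraph.Walk.take_length]; omega
  · rw [SimpleGraph.Walk.length_copy, SimpleGraph.Walk.take_length, SimpleGraph.Walk.drop_length]
    omega
  · rw [SimpleGraph.Walk.length_copy, SimpleGraph.Walk.drop_length, SimpleGraph.Walk.drop_length]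
    omega
  · rw [SimpleGraph.Walk.append_copy_copy, SimpleGraph.Walk.append_take_drop_eq,
      SimpleGraph.Walk.copy_rfl_rfl, SimpleGraph.Walk.append_take_drop_eq]

/-- A walk `q` between two vertices of `p` splits `p` into two closed walks. -/
theorem length_sub_le_of_minimal (hg : ∀ x y, g x y = -g y x) {u : V} {p : H.Walk u u}
    (hp : holonomy g p ≠ 0)
    (hmin : ∀ v (q : H.Walk v v), q.length < p.length → holonomy g q = 0) {i j : ℕ} (hij : i ≤ j)
    (hj : j ≤ p.length) (q : H.Walk (p.getVert i) (p.getVert j))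
    (hshort : j - i + q.length < p.length) : j - i ≤ q.length := by
  obtain ⟨a, b, d, ha, hb, hd, hsplit⟩ := exists_walk_segments p hij hj
  by_contra! hq
  have houter := hmin _ (a.append (q.append d)) (by
    rw [SimpleGraph.Walk.length_append, SimpleGraph.Walk.length_append]; omega)
  have hinner := hmin _ (b.append q.reverse) (by
    rw [SimpleGraph.Walk.length_append, SimpleGraph.Walk.length_reverse]; omega)
  refine hp ?_
  rw [holonomy_append, holonomy_append] at houter
  rw [holonomy_append, holonomy_reverse hg, ← sub_eq_add_neg, sub_eq_zero] at hinner
  rw [hsplit, holonomy_append, holonomy_append, hinner, houter]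

theorem four_le_length_of_holonomy_ne_zero (hg : ∀ x y, g x y = -g y x)
    (htri : ∀ x y z, H.Adj x y → H.Adj y z → H.Adj z x → g x y + g y z + g z x = 0) {u : V}
    {p : H.Walk u u} (hp : holonomy g p ≠ 0) : 4 ≤ p.length := by
  by_contra! hlt
  match p, hp, hlt with
  | .nil, hp, _ => exact hp (holonomy_nil u)
  | .cons h .nil, _, _ => exact h.ne rfl
  | .cons (v := v) h (.cons h' .nil), hp, _ =>
    exact hp (by rw [holonomy_cons, holonomy_cons, holonomy_nil, hg u v]; abel)
  | .cons h (.cons h' (.cons h'' .nil)), hp, _ =>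
    refine hp ?_
    rw [holonomy_cons, holonomy_cons, holonomy_cons, holonomy_nil, add_zero, ← add_assoc]
    exact htri _ _ _ h h' h''
  | .cons _ (.cons _ (.cons _ (.cons _ _))), _, hlt =>
    simp only [SimpleGraph.Walk.length_cons] at hlt
    omega

theorem exists_isInducedCycle_of_cocycle (hg : ∀ x y, g x y = -g y x)
    (htri : ∀ x y z, H.Adj x y → H.Adj y z → H.Adj z x → g x y + g y z + g z x = 0)
    (hcobdry : ¬∃ f : V → A, ∀ x y, H.Adj x y → g x y = f x - f y) :
    ∃ m c, 4 ≤ m ∧ IsInducedCycle H m c := by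
  have hex : ∃ N u, ∃ p : H.Walk u u, p.length = N ∧ holonomy g p ≠ 0 := by
    by_contra! h
    exact hcobdry (exists_potential hg fun u p => h _ u p rfl)
  classical
  obtain ⟨u, p, hlen, hp⟩ := Nat.find_spec hex
  have hmin : ∀ v (q : H.Walk v v), q.length < p.length → holonomy g q = 0 := fun v q hq => by
    by_contra h
    exact Nat.find_min hex (hlen ▸ hq) ⟨v, q, rfl, h⟩
  have hfour := four_le_length_of_holonomy_ne_zero hg htri hp
  refine ⟨p.length, p.getVert, hfour, by simp, fun i j hij hj heq => ?_, fun i j hij hj => ?_⟩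
  · let q : H.Walk (p.getVert i) (p.getVert j) := SimpleGraph.Walk.nil.copy rfl heq
    have hq : q.length = 0 := by rw [SimpleGraph.Walk.length_copy, SimpleGraph.Walk.length_nil]
    have := length_sub_le_of_minimal hg hp hmin hij.le hj.le q (by omega)
    omega
  · refine ⟨fun hadj => ?_, ?_⟩
    · have := length_sub_le_of_minimal hg hp hmin hij.le hj.le hadj.toWalk
      rw [hadj.length_toWalk] at this
      omega
    · rintro (rfl | ⟨rfl, hjm⟩)
      · exact p.adj_getVert_succ (by omega)
      · have := p.adj_getVert_succ hj
        rw [hjm, p.getVert_length] at this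
        rw [p.getVert_zero]
        exact this.symm

end Holonomy

section InducedCycles

theorem mod_eq_or {m i k : ℕ} (hk : k < m) (hi : i < m) :
    (i + k) % m = i + k ∧ i + k < m ∨ (i + k) % m = i + k - m ∧ m ≤ i + k := by
  rcases lt_or_ge (i + k) m with h | h
  · exact Or.inl ⟨Nat.mod_eq_of_lt h, h⟩
  · exact Or.inr ⟨by rw [Nat.mod_eq_sub_mod h, Nat.mod_eq_of_lt (by omega)], h⟩

variable {V : Type} {H : SimpleGraph V} {m : ℕ} {c : ℕ → V}

theorem IsInducedCycle.map {V' : Type} {H' : SimpleGraph V'} (f : H ↪g H')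
    (h : IsInducedCycle H m c) : IsInducedCycle H' m (f ∘ c) where
  closed := congrArg f h.closed
  ne i j hij hj := f.injective.ne (h.ne i j hij hj)
  adj_iff i j hij hj := f.map_adj_iff.trans (h.adj_iff i j hij hj)

theorem IsInducedCycle.rotate (h : IsInducedCycle H m c) {k : ℕ} (hk : k < m) :
    IsInducedCycle H m fun i => c ((i + k) % m) where
  closed := by rw [Nat.add_mod_left, zero_add]
  ne i j hij hj := by
    rcases mod_eq_or hk (hij.trans hj) with ⟨hi, hi'⟩ | ⟨hi, hi'⟩ <;>
      rcases mod_eq_or hk hj with ⟨hj, hj'⟩ | ⟨hj, hj'⟩ <;> rw [hi, hj]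
    · exact h.ne _ _ (by omega) hj'
    · exact (h.ne _ _ (by omega) hi').symm
    · omega
    · exact h.ne _ _ (by omega) (by omega)
  adj_iff i j hij hj := by
    rcases mod_eq_or hk (hij.trans hj) with ⟨hi, hi'⟩ | ⟨hi, hi'⟩ <;>
      rcases mod_eq_or hk hj with ⟨hj, hj'⟩ | ⟨hj, hj'⟩ <;> rw [hi, hj]
    · rw [h.adj_iff _ _ (by omega) hj']; omega
    · rw [H.adj_comm, h.adj_iff _ _ (by omega) hi']; omega
    · omega
    · rw [h.adj_iff _ _ (by omega) (by omega)]; omega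

theorem IsInducedCycle.adj_succ (h : IsInducedCycle H m c) (hm : 3 ≤ m) {i : ℕ} (hi : i < m) :
    H.Adj (c i) (c (i + 1)) := by
  obtain him | him := (Nat.succ_le_of_lt hi).lt_or_eq
  · exact (h.adj_iff i (i + 1) (by omega) him).2 (Or.inl rfl)
  · rw [← Nat.succ_eq_add_one, him, h.closed]
    exact ((h.adj_iff 0 i (by omega) hi).2 (Or.inr ⟨rfl, him⟩)).symm

end InducedCycles

section DominatedCycles

variable {K β : Type} [Field K] [LinearOrder β] {G : SimpleGraph β} {W F T : Finset β} {t : ℕ}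

/-- The independence complex of `G` restricted to `W` has a cycle passing through the facet `F`. For
an independent set, being a facet of the restriction means dominating `W`. -/
def DominatesCycle (K : Type) [Field K] (G : SimpleGraph β) (F W : Finset β) : Prop :=
  HasCycleThrough K (indepComplex G) W F ∧ ∀ w ∈ W, w ∉ F → ∃ f ∈ F, G.Adj w f

theorem insert_notMem_indepComplex {w : β} (h : ∃ f ∈ F, G.Adj w f) :
    insert w F ∉ indepComplex G := by
  obtain ⟨f, hf, hwf⟩ := h
  exact fun hmem => (insert_mem_indepComplex_iff.1 hmem).1 f hf hwf

theorem DominatesCycle.hasTor (h : DominatesCycle K G F W) :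
    HasTor K (indepComplex G) W (W.card - F.card) :=
  h.1.hasTor fun w hw hwF => insert_notMem_indepComplex (h.2 w hw hwF)

theorem DominatesCycle.mono (h : DominatesCycle K G F W) (hT : ∀ w ∈ T, ∃ f ∈ F, G.Adj w f) :
    DominatesCycle K G F (W ∪ T) :=
  ⟨h.1.mono Finset.subset_union_left, fun w hw hwF =>
    (Finset.mem_union.1 hw).elim (fun hwW => h.2 w hwW hwF) (hT w)⟩

theorem DominatesCycle.card_neighbors_le (h : DominatesCycle K G F W)
    (hG : HasAlmostMaximalIndex K G t) (hT : ∀ w ∈ T, ∃ f ∈ F, G.Adj w f) : T.card ≤ t + 2 := by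
  have hmono := h.mono hT
  have hsub : T ⊆ (W ∪ T) \ F := fun w hw => Finset.mem_sdiff.2 ⟨Finset.mem_union_right W hw,
    fun hwF => insert_notMem_indepComplex (hT w hw) (by
      rw [Finset.insert_eq_self.2 hwF]; exact hmono.1.mem)⟩
  calc T.card ≤ ((W ∪ T) \ F).card := Finset.card_le_card hsub
    _ = (W ∪ T).card - F.card := Finset.card_sdiff_of_subset hmono.1.1
    _ ≤ t + 2 := hG.le_add_two _ _ hmono.hasTor

theorem DominatesCycle.le_card (h : DominatesCycle K G F W) (hG : HasAlmostMaximalIndex K G t)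
    (hF : 2 ≤ F.card) : F.card + t + 1 ≤ W.card := by
  have hFW := Finset.card_le_card h.1.1
  have := hG.lt_of_nonlinear _ _ h.hasTor (by omega)
  omega

theorem dominatesCycle_empty : DominatesCycle K G ∅ ∅ :=
  ⟨hasCycleThrough_empty (by simp [indepComplex]), by simp⟩

theorem DominatesCycle.suspend (h : DominatesCycle K G F W) {s s' : β} (hss' : G.Adj s s')
    (hs : ∀ w ∈ W, ¬G.Adj s w) (hs' : ∀ w ∈ W, ¬G.Adj s' w) :
    DominatesCycle K G (insert s F) (insert s (insert s' W)) := by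
  have hdisj : Disjoint W {s, s'} := by
    rw [Finset.disjoint_right]
    rintro v hv hvW
    rcases Finset.mem_insert.1 hv with rfl | hv
    · exact hs' _ hvW hss'.symm
    · exact hs s' (Finset.mem_singleton.1 hv ▸ hvW) hss'
  have herase : ({s, s'} : Finset β).erase s' = {s} := by
    rw [Finset.erase_insert_of_ne hss'.ne, Finset.erase_singleton, insert_empty_eq]
  have hjoin := h.1.join_boundary hdisj (fun v hv A hA hAΔ => ?_)
    (Finset.mem_insert_of_mem (Finset.mem_singleton_self s'))
  · rw [herase, Finset.union_comm, Finset.union_comm F, ← Finset.insert_eq, Finset.insert_union,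
      ← Finset.insert_eq] at hjoin
    refine ⟨hjoin, fun w hw hwF => ?_⟩
    rcases Finset.mem_insert.1 hw with rfl | hw
    · exact absurd (Finset.mem_insert_self _ F) hwF
    rcases Finset.mem_insert.1 hw with rfl | hw
    · exact ⟨s, Finset.mem_insert_self s F, hss'.symm⟩
    · obtain ⟨f, hf, hwf⟩ := h.2 w hw fun hw => hwF (Finset.mem_insert_of_mem hw)
      exact ⟨f, Finset.mem_insert_of_mem hf, hwf⟩
  · rcases Finset.mem_insert.1 hv with rfl | hv
    · rw [Finset.erase_insert (by simpa using hss'.ne), Finset.union_comm, ← Finset.insert_eq]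
      exact insert_mem_indepComplex_iff.2 ⟨fun y hy => hs' y (hA hy), hAΔ⟩
    · rw [Finset.mem_singleton.1 hv, herase, Finset.union_comm, ← Finset.insert_eq]
      exact insert_mem_indepComplex_iff.2 ⟨fun y hy => hs y (hA hy), hAΔ⟩

theorem dominatesCycle_of_adj {a a' : β} (h : G.Adj a a') : DominatesCycle K G {a} {a, a'} := by
  simpa using (dominatesCycle_empty (K := K)).suspend h (by simp) (by simp)

theorem HasAlmostMaximalIndex.card_le_of_forall_adj (hG : HasAlmostMaximalIndex K G t) {a : β}
    (hT : ∀ w ∈ T, G.Adj a w) : T.card ≤ t + 2 := by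
  rcases T.eq_empty_or_nonempty with rfl | ⟨w, hw⟩
  · simp
  · exact (dominatesCycle_of_adj (hT w hw)).card_neighbors_le hG fun w hw =>
      ⟨a, Finset.mem_singleton_self a, (hT w hw).symm⟩

theorem dominatesCycle_of_closed_walk {c : ℕ → β} {m : ℕ} (hW : ∀ i ≤ m, c i ∈ W)
    (hclosed : c m = c 0) (hedge : ∀ i < m, ¬G.Adj (c i) (c (i + 1))) (hm : 0 < m) (hne : c 0 ≠ c 1)
    (honce : ∀ i < m, 0 < i → ({c i, c (i + 1)} : Finset β) ≠ {c 0, c 1})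
    (hdom : ∀ w ∈ W, w ≠ c 0 → w ≠ c 1 → G.Adj w (c 0) ∨ G.Adj w (c 1)) :
    DominatesCycle K G {c 0, c 1} W := by
  refine ⟨hasCycleThrough_of_closed_walk hW hclosed
    (fun i hi => pair_mem_indepComplex_iff.2 (hedge i hi)) hm hne honce, fun w hw hwF => ?_⟩
  simp only [Finset.mem_insert, Finset.mem_singleton, not_or] at hwF
  simpa using hdom w hw hwF.1 hwF.2

end DominatedCycles

section InducedCyclesOfComplement

variable {K β : Type} [Field K] [LinearOrder β] {G : SimpleGraph β} {W : Finset β} {t m : ℕ}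
  {c : ℕ → β}

theorem IsInducedCycle.injOn {V : Type} {H : SimpleGraph V} {c : ℕ → V}
    (h : IsInducedCycle H m c) : Set.InjOn c (Finset.range m) := by
  intro i hi j hj hij
  by_contra hne
  rcases lt_or_gt_of_ne hne with hlt | hlt
  · exact h.ne i j hlt (Finset.mem_range.1 hj) hij
  · exact h.ne j i hlt (Finset.mem_range.1 hi) hij.symm

theorem IsInducedCycle.card_image (h : IsInducedCycle Gᶜ m c) :
    ((Finset.range m).image c).card = m := by
  rw [Finset.card_image_of_injOn h.injOn, Finset.card_range]

theorem IsInducedCycle.dominatesCycle (h : IsInducedCycle Gᶜ m c) (hm : 4 ≤ m) :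
    DominatesCycle K G {c 0, c 1} ((Finset.range m).image c) := by
  refine dominatesCycle_of_closed_walk (fun i hi => ?_) h.closed
    (fun i hi => ((G.compl_adj _ _).1 (h.adj_succ (by omega) hi)).2) (by omega)
    (h.ne 0 1 one_pos (by omega)) (fun i hi hi0 heq => ?_) fun w hw hw0 hw1 => ?_
  · rcases hi.lt_or_eq with hi | rfl
    · exact Finset.mem_image_of_mem c (Finset.mem_range.2 hi)
    · rw [h.closed]
      exact Finset.mem_image_of_mem c (Finset.mem_range.2 (by omega))
  · have hi_mem : c i ∈ ({c 0, c 1} : Finset β) := heq ▸ Finset.mem_insert_self _ _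
    have hsucc_mem : c (i + 1) ∈ ({c 0, c 1} : Finset β) := heq ▸ by simp
    simp only [Finset.mem_insert, Finset.mem_singleton] at hi_mem hsucc_mem
    have := h.ne 0 i hi0 hi
    have := h.ne 1 i
    have := h.ne 0 (i + 1)
    have := h.ne 1 (i + 1)
    grind
  · obtain ⟨i, hi, rfl⟩ := Finset.mem_image.1 hw
    have him := Finset.mem_range.1 hi
    have hi0 : i ≠ 0 := by rintro rfl; exact hw0 rfl
    have hi1 : i ≠ 1 := by rintro rfl; exact hw1 rfl
    by_contra! hnadj
    have h0 := (h.adj_iff 0 i (by omega) him).1 (Gᶜ.adj_symm ((G.compl_adj _ _).2 ⟨hw0, hnadj.1⟩))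
    have h1 := (h.adj_iff 1 i (by omega) him).1 (Gᶜ.adj_symm ((G.compl_adj _ _).2 ⟨hw1, hnadj.2⟩))
    omega

theorem IsInducedCycle.add_three_le (h : IsInducedCycle Gᶜ m c) (hm : 4 ≤ m)
    (hG : HasAlmostMaximalIndex K G t) : t + 3 ≤ m := by
  have := (h.dominatesCycle hm).le_card hG (Finset.card_pair (h.ne 0 1 one_pos (by omega))).ge
  rw [Finset.card_pair (h.ne 0 1 one_pos (by omega)), h.card_image] at this
  omega

theorem HasTor.exists_isInducedCycle {p : ℕ} (h : HasTor K (indepComplex G) W p)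
    (hp : p + 2 = W.card) :
    ∃ m c, 4 ≤ m ∧ IsInducedCycle Gᶜ m c ∧ (Finset.range m).image c ⊆ W := by
  obtain ⟨g, hg, htri, hcobdry⟩ := h.exists_cocycle hp
  have hnadj : ∀ {a b : (W : Set β)}, (Gᶜ.induce W).Adj a b → ¬G.Adj a b := fun hab =>
    ((G.compl_adj _ _).1 hab).2
  have htri' : ∀ x y z : (W : Set β), (Gᶜ.induce W).Adj x y → (Gᶜ.induce W).Adj y z →
      (Gᶜ.induce W).Adj z x → g x y + g y z + g z x = 0 := by
    intro x y z hxy hyz hzx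
    have hface : {x.1, y.1, z.1} ∈ indepComplex G := by
      simp only [insert_mem_indepComplex_iff, Finset.mem_insert, Finset.mem_singleton,
        forall_eq_or_imp, forall_eq]
      exact ⟨⟨hnadj hxy, hnadj hzx.symm⟩, hnadj hyz, singleton_mem_indepComplex G _⟩
    rw [hg z x, ← htri x x.2 y y.2 z z.2 hface]
    abel
  have hcobdry' : ¬∃ f : ↥(W : Set β) → K,
      ∀ x y : ↥(W : Set β), (Gᶜ.induce W).Adj x y → g x y = f x - f y := by
    refine fun ⟨f, hf⟩ => hcobdry ⟨Function.extend Subtype.val f 0, fun x hx y hy hxy hΔ => ?_⟩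
    have := hf ⟨x, hx⟩ ⟨y, hy⟩ ((G.compl_adj x y).2 ⟨hxy, pair_mem_indepComplex_iff.1 hΔ⟩)
    rwa [← Subtype.val_injective.extend_apply f 0, ← Subtype.val_injective.extend_apply f 0] at this
  obtain ⟨m, c, hm, hc⟩ :=
    exists_isInducedCycle_of_cocycle (fun x y : (W : Set β) => hg x y) htri' hcobdry'
  refine ⟨m, _, hm, hc.map (SimpleGraph.Embedding.induce _), fun w hw => ?_⟩
  obtain ⟨i, -, rfl⟩ := Finset.mem_image.1 hw
  exact (c i).2

theorem HasAlmostMaximalIndex.exists_isInducedCycle (hG : HasAlmostMaximalIndex K G t) :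
    1 ≤ t ∧ ∃ c, IsInducedCycle Gᶜ (t + 3) c := by
  obtain ⟨W, hTor, hW⟩ := hG.exists_nonlinear
  have hcard := hG.card_eq hTor hW
  obtain ⟨m, c, hm, hc, hcW⟩ := hTor.exists_isInducedCycle (by omega)
  have hle := Finset.card_le_card hcW
  have hge := hc.add_three_le hm hG
  rw [hc.card_image, hcard] at hle
  obtain rfl : m = t + 3 := le_antisymm hle hge
  exact ⟨by omega, c, hc⟩

/-- With only `t + 3` vertices the cycle spans the complement of `G`, which is then connected; but
`Tor_{t + 2}` could only be nonzero in the degree of all vertices, as a nonzero `H⁰`. -/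
theorem HasAlmostMaximalIndex.add_four_le_card [Fintype β] (hG : HasAlmostMaximalIndex K G t) :
    t + 4 ≤ Fintype.card β := by
  obtain ⟨-, c, hc⟩ := hG.exists_isInducedCycle
  obtain ⟨W, hTor⟩ := hG.exists_add_two
  by_contra! hcard
  have hspan : (Finset.range (t + 3)).image c = Finset.univ := by
    rw [← Finset.card_eq_iff_eq_univ]
    exact le_antisymm (Finset.card_le_univ _) (by rw [hc.card_image]; omega)
  have hlow := hTor.le_card
  have hupp : W.card ≤ Fintype.card β := Finset.card_le_univ W
  obtain ⟨x, hx⟩ : W.Nonempty := Finset.card_pos.1 (by omega)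
  have hne : t + 2 ≠ W.card := fun h =>
    not_hasTor_card hx (singleton_mem_indepComplex G x) (h ▸ hTor)
  obtain ⟨f, hf, hconst⟩ := hTor.exists_locallyConstant (by omega)
  have hWuniv : W = Finset.univ := Finset.card_eq_iff_eq_univ W |>.1 (by omega)
  have hmem : ∀ x, x ∈ W := fun x => hWuniv ▸ Finset.mem_univ x
  have hfc : ∀ i < t + 3, f (c i) = f (c 0) := by
    intro i hi
    induction i with
    | zero => rfl
    | succ i ih =>
      have hadj := (G.compl_adj _ _).1 (hc.adj_succ (by omega) (show i < t + 3 by omega))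
      rw [← hf _ (hmem _) _ (hmem _) (pair_mem_indepComplex_iff.2 hadj.2), ih (by omega)]
  refine hconst ⟨f (c 0), fun x _ => ?_⟩
  obtain ⟨i, hi, rfl⟩ := Finset.mem_image.1 (hspan ▸ Finset.mem_univ x)
  exact hfc i (Finset.mem_range.1 hi)

end InducedCyclesOfComplement

section ChordsOfTheCycle

variable {V : Type} {G : SimpleGraph V} {m i j k : ℕ} {c : ℕ → V} {r : V}

theorem IsInducedCycle.adj_of_lt (h : IsInducedCycle Gᶜ m c) (hij : i + 1 < j)
    (hj : j < m) (h0 : i ≠ 0 ∨ j + 1 ≠ m) : G.Adj (c i) (c j) := by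
  by_contra hnadj
  have := (h.adj_iff i j (by omega) hj).1
    ((G.compl_adj _ _).2 ⟨h.ne i j (by omega) hj, hnadj⟩)
  omega

theorem exists_not_and_succ {P : ℕ → Prop} (hm : P 0 → P m) (hi : i < m) (hPi : P i)
    (hj : j < m) (hPj : ¬P j) : ∃ l < m, ¬P l ∧ P (l + 1) := by
  by_contra! h
  have hup : ∀ a b, a ≤ b → b ≤ m → ¬P a → ¬P b := fun a b hab => by
    induction b, hab using Nat.le_induction with
    | base => exact fun _ => id
    | succ b _ ih => exact fun hb ha => h b (by omega) (ih (by omega) ha)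
  exact hup 0 i i.zero_le hi.le (fun h0 => hup j m hj.le le_rfl hPj (hm h0)) hPi

theorem IsInducedCycle.exists_rotate_of_adj (h : IsInducedCycle Gᶜ m c) (hi : i < m)
    (hadj : G.Adj r (c i)) (hk : k < m) (hnadj : ¬G.Adj r (c k)) :
    ∃ l < m, ¬G.Adj r (c l) ∧ G.Adj r (c ((1 + l) % m)) := by
  obtain ⟨l, hl, hl0, hl1⟩ := exists_not_and_succ (P := fun j => G.Adj r (c j))
    (fun h0 => h.closed.symm ▸ h0) hi hadj hk hnadj
  refine ⟨l, hl, hl0, ?_⟩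
  rcases (by omega : l + 1 < m ∨ l + 1 = m) with hlm | hlm
  · rwa [add_comm 1 l, Nat.mod_eq_of_lt hlm]
  · rw [add_comm 1 l, hlm, Nat.mod_self, ← h.closed, ← hlm]
    exact hl1

end ChordsOfTheCycle

section ClosedArcs

variable {V : Type} {H : SimpleGraph V} {c : ℕ → V} {m i k : ℕ} {r : V}

/-- The closed walk `c 0, c 1, …, c k, r, c 0`; values beyond `k + 2` are irrelevant. -/
def closeArc (c : ℕ → V) (k : ℕ) (r : V) (j : ℕ) : V :=
  if j ≤ k then c j else if j = k + 1 then r else c 0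

theorem closeArc_of_le (hik : i ≤ k) : closeArc c k r i = c i := if_pos hik

theorem closeArc_succ : closeArc c k r (k + 1) = r := by simp [closeArc]

theorem closeArc_add_two : closeArc c k r (k + 2) = c 0 := by simp [closeArc]

theorem closeArc_mem [DecidableEq V] (hi : i ≤ k + 2) :
    closeArc c k r i ∈ insert r ((Finset.range (k + 1)).image c) := by
  have hmem : ∀ j ≤ k, c j ∈ insert r ((Finset.range (k + 1)).image c) := fun j hj =>
    Finset.mem_insert_of_mem (Finset.mem_image_of_mem c (Finset.mem_range.2 (Nat.lt_succ_of_le hj)))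
  rcases (by omega : i ≤ k ∨ i = k + 1 ∨ i = k + 2) with hik | rfl | rfl
  · exact (closeArc_of_le hik).symm ▸ hmem i hik
  · exact (closeArc_succ (c := c)).symm ▸ Finset.mem_insert_self _ _
  · exact (closeArc_add_two (r := r)).symm ▸ hmem 0 k.zero_le

theorem IsInducedCycle.closeArc_notMem_pair [DecidableEq V] (h : IsInducedCycle H m c)
    (hr : ∀ j < m, c j ≠ r) (hkm : k < m) (hi2 : 2 ≤ i) (hik : i ≤ k + 1) :
    closeArc c k r i ∉ ({c 0, c 1} : Finset V) := by
  rw [Finset.mem_insert, Finset.mem_singleton]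
  rcases hik.lt_or_eq with hik | rfl
  · rw [closeArc_of_le (Nat.le_of_lt_succ hik)]
    exact not_or_intro (h.ne 0 i (by omega) (by omega)).symm (h.ne 1 i hi2 (by omega)).symm
  · rw [closeArc_succ]
    exact not_or_intro (hr 0 (by omega)).symm (hr 1 (by omega)).symm

end ClosedArcs

section VerticesOffTheCycle

variable {K β : Type} [Field K] [LinearOrder β] {G : SimpleGraph β} {t m i k : ℕ} {c : ℕ → β}
  {r r' : β}

theorem IsInducedCycle.eq_of_adj_edge (h : IsInducedCycle Gᶜ (t + 3) c)
    (hG : HasAlmostMaximalIndex K G t) (ht : 1 ≤ t) (hr : ∀ j < t + 3, c j ≠ r)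
    (hr' : ∀ j < t + 3, c j ≠ r') (hi : i + 1 < t + 3)
    (hadj : G.Adj r (c i) ∨ G.Adj r (c (i + 1))) (hadj' : G.Adj r' (c i) ∨ G.Adj r' (c (i + 1))) :
    r = r' := by
  have hrot := h.rotate (show i < t + 3 by omega)
  have hdom := hrot.dominatesCycle (K := K) (by omega)
  rw [zero_add, Nat.mod_eq_of_lt (show i < t + 3 by omega), add_comm 1 i, Nat.mod_eq_of_lt hi]
    at hdom
  set C := (Finset.range (t + 3)).image fun j => c ((j + i) % (t + 3)) with hC
  have hcard : ({c i, c (i + 1)} : Finset β).card = 2 :=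
    Finset.card_pair (h.ne i (i + 1) (by omega) hi)
  have hnotMem : ∀ s, (∀ j < t + 3, c j ≠ s) → s ∉ C \ {c i, c (i + 1)} := fun s hs hsC => by
    obtain ⟨j, -, hj⟩ := Finset.mem_image.1 (Finset.mem_sdiff.1 hsC).1
    exact hs _ (Nat.mod_lt _ (by omega)) hj
  by_contra hne
  have hle := hdom.card_neighbors_le (T := insert r (insert r' (C \ {c i, c (i + 1)}))) hG ?_
  · rw [Finset.card_insert_of_notMem (by simpa [hne] using hnotMem r hr),
      Finset.card_insert_of_notMem (hnotMem r' hr'), Finset.card_sdiff_of_subset hdom.1.1, hcard,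
      hC, hrot.card_image] at hle
    omega
  · intro w hw
    rcases Finset.mem_insert.1 hw with rfl | hw
    · simpa using hadj
    rcases Finset.mem_insert.1 hw with rfl | hw
    · simpa using hadj'
    · obtain ⟨hwC, hwF⟩ := Finset.mem_sdiff.1 hw
      exact hdom.2 w hwC hwF

theorem IsInducedCycle.dominatesCycle_arc (h : IsInducedCycle Gᶜ m c) (hm : 4 ≤ m)
    (hr : ∀ j < m, c j ≠ r) (h0 : ¬G.Adj r (c 0)) (h1 : G.Adj r (c 1)) (hk : ¬G.Adj r (c k))
    (hk2 : 2 ≤ k) (hkm : k < m) :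
    DominatesCycle K G {c 0, c 1} (insert r ((Finset.range (k + 1)).image c)) := by
  have hd : ∀ j ≤ k, closeArc c k r j = c j := fun j => closeArc_of_le
  have hne01 : c 0 ≠ c 1 := h.ne 0 1 one_pos (by omega)
  rw [← hd 0 (by omega), ← hd 1 (by omega)] at hne01 ⊢
  refine dominatesCycle_of_closed_walk (m := k + 2) (fun j => closeArc_mem)
    (closeArc_add_two.trans (hd 0 k.zero_le).symm) (fun j hj => ?_) (by omega) hne01
    (fun j hj hj0 heq => ?_) fun w hw hw0 hw1 => ?_
  · rcases (by omega : j < k ∨ j = k ∨ j = k + 1) with hjk | rfl | rfl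
    · rw [hd j hjk.le, hd (j + 1) hjk]
      exact ((G.compl_adj _ _).1 (h.adj_succ (by omega) (by omega))).2
    · rw [hd j le_rfl, closeArc_succ]
      exact fun hadj => hk hadj.symm
    · rwa [closeArc_succ, closeArc_add_two]
  · rw [hd 0 (by omega), hd 1 (by omega)] at heq
    rcases (by omega : j = 1 ∨ 2 ≤ j) with rfl | hj2
    · exact h.closeArc_notMem_pair hr hkm le_rfl (by omega)
        (heq ▸ Finset.mem_insert_of_mem (Finset.mem_singleton_self _))
    · exact h.closeArc_notMem_pair hr hkm hj2 (by omega) (heq ▸ Finset.mem_insert_self _ _)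
  · rw [hd 0 (by omega)] at hw0 ⊢
    rw [hd 1 (by omega)] at hw1 ⊢
    rcases Finset.mem_insert.1 hw with rfl | hw
    · exact Or.inr h1
    obtain ⟨j, hj, rfl⟩ := Finset.mem_image.1 hw
    have hjk : j < k + 1 := Finset.mem_range.1 hj
    rcases (by omega : j = 0 ∨ j = 1 ∨ j = 2 ∨ 2 < j) with rfl | rfl | rfl | hj2
    · exact absurd rfl hw0
    · exact absurd rfl hw1
    · exact Or.inl (h.adj_of_lt (i := 0) one_lt_two (by omega) (by omega)).symm
    · exact Or.inr (h.adj_of_lt (i := 1) hj2 (by omega) (by omega)).symm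

theorem IsInducedCycle.le_of_not_adj (h : IsInducedCycle Gᶜ (t + 3) c)
    (hG : HasAlmostMaximalIndex K G t) (ht : 1 ≤ t) (hr : ∀ j < t + 3, c j ≠ r)
    (h0 : ¬G.Adj r (c 0)) (h1 : G.Adj r (c 1)) (hk : ¬G.Adj r (c k)) (hk2 : 2 ≤ k)
    (hkt : k < t + 3) : t + 1 ≤ k := by
  have hle := (h.dominatesCycle_arc (K := K) (by omega) hr h0 h1 hk hk2 hkt).le_card hG
    (Finset.card_pair (h.ne 0 1 one_pos (by omega))).ge
  rw [Finset.card_pair (h.ne 0 1 one_pos (by omega))] at hle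
  have hcard := (Finset.card_insert_le r ((Finset.range (k + 1)).image c)).trans
    (Nat.succ_le_succ Finset.card_image_le)
  rw [Finset.card_range] at hcard
  omega

/-- If `r` is nonadjacent to `c 0` but adjacent to `c 1`, short cycles through `r` are avoided only
if `r` is adjacent to all of `c 1, …, c t`. Then `r'` has only `c (t + 2)` as a neighbour, and
running round the cycle from there gives a short cycle through `r'`. -/
theorem IsInducedCycle.not_adj_of_not_adj_of_adj (h : IsInducedCycle Gᶜ (t + 3) c)
    (hG : HasAlmostMaximalIndex K G t) (ht : 2 ≤ t) (hr : ∀ j < t + 3, c j ≠ r)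
    (hr' : ∀ j < t + 3, c j ≠ r') (hne : r ≠ r') (h0 : ¬G.Adj r (c 0)) (h1 : G.Adj r (c 1))
    (hi : i < t + 3) : ¬G.Adj r' (c i) := by
  have hadj : ∀ j, 1 ≤ j → j ≤ t → G.Adj r (c j) := fun j hj1 hjt => by
    by_contra hnadj
    rcases hj1.eq_or_lt with rfl | hj2
    · exact hnadj h1
    · have := h.le_of_not_adj hG (by omega) hr h0 h1 hnadj hj2 (by omega)
      omega
  have hedge : ∀ j, j + 1 < t + 3 → G.Adj r (c j) ∨ G.Adj r (c (j + 1)) →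
      ¬(G.Adj r' (c j) ∨ G.Adj r' (c (j + 1))) := fun j hj hrj hrj' =>
    hne (h.eq_of_adj_edge hG (by omega) hr hr' hj hrj hrj')
  have hnadj : ∀ j ≤ t + 1, ¬G.Adj r' (c j) := fun j hj hrj' => by
    rcases j with - | j
    · exact hedge 0 (by omega) (Or.inr h1) (Or.inl hrj')
    rcases j with - | j
    · exact hedge 0 (by omega) (Or.inr h1) (Or.inr hrj')
    · exact hedge (j + 1) (by omega) (Or.inl (hadj _ (by omega) (by omega))) (Or.inr hrj')
  intro hri
  obtain rfl : i = t + 2 := by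
    by_contra hit
    exact hnadj i (by omega) hri
  have hrot := h.rotate (show t + 1 < t + 3 by omega)
  have hle := hrot.le_of_not_adj (k := 2) (r := r') hG (by omega)
    (fun j _ => hr' _ (Nat.mod_lt _ (by omega)))
    (by rw [zero_add, Nat.mod_eq_of_lt (by omega)]; exact hnadj _ le_rfl)
    (by rwa [show 1 + (t + 1) = t + 2 by omega, Nat.mod_eq_of_lt (by omega)])
    (by rw [show 2 + (t + 1) = t + 3 by omega, Nat.mod_self]; exact hnadj 0 (by omega))
    le_rfl (by omega)
  omega

theorem IsInducedCycle.eq_of_adj (h : IsInducedCycle Gᶜ (t + 3) c)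
    (hG : HasAlmostMaximalIndex K G t) (ht : 2 ≤ t) (hr : ∀ j < t + 3, c j ≠ r)
    (hr' : ∀ j < t + 3, c j ≠ r') (hi : i < t + 3) (hadj : G.Adj r (c i)) (hk : k < t + 3)
    (hadj' : G.Adj r' (c k)) : r = r' := by
  by_cases hall : ∀ j < t + 3, G.Adj r (c j)
  · rcases k with - | k
    · exact h.eq_of_adj_edge (i := 0) hG (by omega) hr hr' (by omega) (.inl (hall 0 hk))
        (.inl hadj')
    · exact h.eq_of_adj_edge hG (by omega) hr hr' hk (.inl (hall k (by omega))) (.inr hadj')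
  push Not at hall
  obtain ⟨j, hj, hnadj⟩ := hall
  obtain ⟨l, hl, hl0, hl1⟩ := h.exists_rotate_of_adj hi hadj hj hnadj
  by_contra hne
  obtain ⟨k', hk', hkk'⟩ : ∃ k' < t + 3, (k' + l) % (t + 3) = k := by
    rcases le_or_gt l k with hlk | hlk
    · exact ⟨k - l, by omega, by rw [Nat.sub_add_cancel hlk, Nat.mod_eq_of_lt hk]⟩
    · exact ⟨k + (t + 3) - l, by omega, by
        rw [Nat.sub_add_cancel (by omega), Nat.add_mod_right, Nat.mod_eq_of_lt hk]⟩
  refine (h.rotate hl).not_adj_of_not_adj_of_adj hG ht (fun j _ => hr _ (Nat.mod_lt _ (by omega)))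
    (fun j _ => hr' _ (Nat.mod_lt _ (by omega))) hne ?_ hl1 hk' ?_
  · rwa [zero_add, Nat.mod_eq_of_lt hl]
  · rwa [hkk']

end VerticesOffTheCycle

section InducedMatchings

variable {V : Type} {G : SimpleGraph V} {a a' b b' : V}

/-- The edges `aa'` and `bb'` form an induced pair of disjoint edges, that is, a four-cycle
`a, b, a', b'` in the complement. -/
structure IsInducedMatching (G : SimpleGraph V) (a a' b b' : V) : Prop where
  left : G.Adj a a'
  right : G.Adj b b'
  not_adj : ¬G.Adj a b
  not_adj_right : ¬G.Adj a b'
  not_adj_left : ¬G.Adj a' b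
  not_adj_both : ¬G.Adj a' b'

theorem IsInducedMatching.ne (h : IsInducedMatching G a a' b b') : a ≠ b := by
  rintro rfl
  exact h.not_adj_left h.left.symm

theorem IsInducedMatching.symm (h : IsInducedMatching G a a' b b') :
    IsInducedMatching G b b' a a' :=
  ⟨h.right, h.left, mt .symm h.not_adj, mt .symm h.not_adj_left, mt .symm h.not_adj_right,
    mt .symm h.not_adj_both⟩

theorem IsInducedMatching.flip (h : IsInducedMatching G a a' b b') :
    IsInducedMatching G a' a b b' :=
  ⟨h.left.symm, h.right, h.not_adj_left, h.not_adj_both, h.not_adj, h.not_adj_right⟩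

end InducedMatchings

section IndexAtLeastTwo

variable {K β : Type} [Field K] [LinearOrder β] {G : SimpleGraph β} {t : ℕ} {a a' b b' : β}

theorem IsInducedMatching.dominatesCycle (h : IsInducedMatching G a a' b b') :
    DominatesCycle K G {a, b} {a, a', b, b'} :=
  (dominatesCycle_of_adj h.right).suspend h.left (by simp [h.not_adj, h.not_adj_right])
    (by simp [h.not_adj_left, h.not_adj_both])

theorem HasAlmostMaximalIndex.not_isInducedMatching (hG : HasAlmostMaximalIndex K G t)
    (ht : 2 ≤ t) : ¬IsInducedMatching G a a' b b' := by
  intro h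
  have hle := (h.dominatesCycle (K := K)).le_card hG (Finset.card_pair h.ne).ge
  rw [Finset.card_pair h.ne] at hle
  have : ({a, a', b, b'} : Finset β).card ≤ 4 := Finset.card_le_four
  omega

theorem HasAlmostMaximalIndex.exists_adj_of_notMem (hG : HasAlmostMaximalIndex K G t) (ht : 2 ≤ t)
    (hiso : ∀ v, ∃ w, G.Adj v w) {c : ℕ → β} (hc : IsInducedCycle Gᶜ (t + 3) c) {C : Finset β}
    (hC : C = (Finset.range (t + 3)).image c) {u v : β} (hu : u ∉ C) (hv : v ∉ C) (huv : u ≠ v) :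
    ∃ x, ∀ y ∉ C, y ≠ x → G.Adj x y ∧ ∀ w ∈ C, ¬G.Adj y w := by
  have hmemC : ∀ {j}, j < t + 3 → c j ∈ C := fun hj =>
    hC ▸ Finset.mem_image_of_mem c (Finset.mem_range.2 hj)
  have hfull : ∀ {y z}, y ∉ C → z ∉ C → y ≠ z → (∃ w ∈ C, G.Adj y w) → ∀ w ∈ C, ¬G.Adj z w := by
    rintro y z hy hz hyz ⟨v, hv, hyv⟩ w hw hzw
    obtain ⟨i, hi, rfl⟩ := Finset.mem_image.1 (hC ▸ hv)
    obtain ⟨k, hk, rfl⟩ := Finset.mem_image.1 (hC ▸ hw)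
    exact hyz (hc.eq_of_adj hG ht (fun j hj h => hy (h ▸ hmemC hj))
      (fun j hj h => hz (h ▸ hmemC hj)) (Finset.mem_range.1 hi) hyv (Finset.mem_range.1 hk) hzw)
  have hneighbor : ∀ {y}, (∀ w ∈ C, ¬G.Adj y w) → ∃ x ∉ C, G.Adj y x ∧ ∃ w ∈ C, G.Adj x w := by
    intro y hy
    obtain ⟨x, hyx⟩ := hiso y
    refine ⟨x, fun hx => hy x hx hyx, hyx, ?_⟩
    by_contra! hx
    have h02 : G.Adj (c 0) (c 2) := hc.adj_of_lt (by omega) (by omega) (by omega)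
    exact hG.not_isInducedMatching ht ⟨hyx, h02, hy _ (hmemC (by omega)), hy _ (hmemC (by omega)),
      hx _ (hmemC (by omega)), hx _ (hmemC (by omega))⟩
  obtain ⟨y, hy⟩ : ∃ y, ∀ w ∈ C, ¬G.Adj y w := by
    by_cases hu' : ∃ w ∈ C, G.Adj u w
    · exact ⟨v, hfull hu hv huv hu'⟩
    · exact ⟨u, by push Not at hu'; exact hu'⟩
  obtain ⟨x, hx, -, hxC⟩ := hneighbor hy
  refine ⟨x, fun z hz hzx => ?_⟩
  have hzfull := hfull hx hz hzx.symm hxC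
  obtain ⟨x', hx', hzx', w, hw, hx'w⟩ := hneighbor hzfull
  obtain rfl : x = x' := by
    by_contra hne
    exact hfull hx hx' hne hxC w hw hx'w
  exact ⟨hzx'.symm, hzfull⟩

theorem HasAlmostMaximalIndex.card_filter_not_adj_le_two (hG : HasAlmostMaximalIndex K G t)
    (ht : 2 ≤ t) {c : ℕ → β} (hc : IsInducedCycle Gᶜ (t + 3) c) [DecidableRel G.Adj] {x u : β}
    (hxu : G.Adj x u) (hu : ∀ j < t + 3, ¬G.Adj u (c j)) :
    {j ∈ Finset.range (t + 3) | ¬G.Adj x (c j)}.card ≤ 2 := by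
  have hclique : ∀ i j, (i < t + 3 ∧ ¬G.Adj x (c i)) → (j < t + 3 ∧ ¬G.Adj x (c j)) → i < j →
      j = i + 1 ∨ i = 0 ∧ j + 1 = t + 3 := by
    rintro i j ⟨-, hxi⟩ ⟨hj, hxj⟩ hij
    refine (hc.adj_iff i j hij hj).1 ((G.compl_adj _ _).2 ⟨hc.ne i j hij hj, fun hadj => ?_⟩)
    exact hG.not_isInducedMatching ht ⟨hxu, hadj, hxi, hxj, hu i (by omega), hu j hj⟩
  by_contra! hcard
  obtain ⟨i, hi, j, hj, k, hk, hij, hik, hjk⟩ := Finset.two_lt_card.1 hcard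
  simp only [Finset.mem_filter, Finset.mem_range] at hi hj hk
  have := hclique i j hi hj
  have := hclique j i hj hi
  have := hclique i k hi hk
  have := hclique k i hk hi
  have := hclique j k hj hk
  have := hclique k j hk hj
  omega

/-- Only one vertex `x` off the cycle can have neighbours on it. The others form an independent set,
hence are joined to `x`; the nonneighbours of `x` on the cycle are pairwise consecutive, so that its
degree is at least `n - 3`. -/
theorem HasAlmostMaximalIndex.card_le_add_five [Fintype β] (hG : HasAlmostMaximalIndex K G t)
    (ht : 2 ≤ t) (hiso : ∀ v, ∃ w, G.Adj v w) : Fintype.card β ≤ t + 5 := by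
  classical
  obtain ⟨-, c, hc⟩ := hG.exists_isInducedCycle
  by_contra! hcard
  set C := (Finset.range (t + 3)).image c with hC
  have hCcard : C.card = t + 3 := hc.card_image
  have hCc : 2 < Cᶜ.card := by rw [Finset.card_compl]; omega
  obtain ⟨u, hu, v, hv, huv⟩ := Finset.one_lt_card.1 (one_lt_two.trans hCc)
  obtain ⟨x, hxadj⟩ := hG.exists_adj_of_notMem ht hiso hc hC (Finset.mem_compl.1 hu)
    (Finset.mem_compl.1 hv) huv
  obtain ⟨y, hy, hyx⟩ := Finset.exists_mem_ne (one_lt_two.trans hCc) x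
  obtain ⟨hxy, hyC⟩ := hxadj y (Finset.mem_compl.1 hy) hyx
  have hnonadj := hG.card_filter_not_adj_le_two ht hc hxy fun j hj =>
    hyC _ (Finset.mem_image_of_mem c (Finset.mem_range.2 hj))
  set N := {j ∈ Finset.range (t + 3) | ¬G.Adj x (c j)}
  have hneighbors : ∀ w ∈ (insert x (N.image c))ᶜ, G.Adj x w := by
    intro w hw
    rw [Finset.mem_compl, Finset.mem_insert, not_or] at hw
    by_cases hwC : w ∈ C
    · obtain ⟨j, hj, rfl⟩ := Finset.mem_image.1 hwC
      by_contra hxw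
      exact hw.2 (Finset.mem_image_of_mem c (Finset.mem_filter.2 ⟨hj, hxw⟩))
    · exact (hxadj w hwC hw.1).1
  have hdeg := hG.card_le_of_forall_adj hneighbors
  have hinsert := Finset.card_insert_le x (N.image c)
  have himage : (N.image c).card ≤ N.card := Finset.card_image_le
  rw [Finset.card_compl] at hdeg
  omega

end IndexAtLeastTwo

section IndexOne

variable {K β : Type} [Field K] [LinearOrder β] {G : SimpleGraph β} {t : ℕ} {W F : Finset β}
  {a a' b b' r s y z w : β}

theorem DominatesCycle.length_le (h : DominatesCycle K G F W) (hG : HasAlmostMaximalIndex K G t)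
    {l : List β} (hl : l.Nodup) (hadj : ∀ w ∈ l, ∃ f ∈ F, G.Adj w f) : l.length ≤ t + 2 := by
  rw [← List.toFinset_card_of_nodup hl]
  exact h.card_neighbors_le hG fun w hw => hadj w (List.mem_toFinset.1 hw)

/-- `v` has a neighbour on one of the edges `aa'` and `bb'`. -/
def Touches (G : SimpleGraph β) (a a' b b' v : β) : Prop :=
  G.Adj v a ∨ G.Adj v a' ∨ G.Adj v b ∨ G.Adj v b'

theorem IsInducedMatching.eq_of_adj (h : IsInducedMatching G a a' b b')
    (hG : HasAlmostMaximalIndex K G 1) (hy : y ∉ [a', b']) (hz : z ∉ [a', b'])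
    (hyadj : G.Adj y a ∨ G.Adj y b) (hzadj : G.Adj z a ∨ G.Adj z b) : y = z := by
  by_contra hne
  have hnodup : [y, z, a', b'].Nodup := by
    have := h.right
    have := h.not_adj_right
    have := h.left
    grind [SimpleGraph.adj_comm]
  have := (h.dominatesCycle (K := K)).length_le hG hnodup
    (by simp [hyadj, hzadj, h.left.symm, h.right.symm])
  simp at this

theorem IsInducedMatching.dominatesCycle_insert (h : IsInducedMatching G a a' b b')
    (hyz : G.Adj y z) (hy : ¬Touches G a a' b b' y) (hz : ¬Touches G a a' b b' z) :
    DominatesCycle K G {y, a, b} {y, z, a, a', b, b'} := by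
  simp only [Touches, not_or] at hy hz
  exact h.dominatesCycle.suspend hyz (by simp [hy]) (by simp [hz])

theorem IsInducedMatching.eq_of_adj_of_not_touches (h : IsInducedMatching G a a' b b')
    (hG : HasAlmostMaximalIndex K G 1) (hyz : G.Adj y z) (hy : ¬Touches G a a' b b' y)
    (hz : ¬Touches G a a' b b' z) (hw : G.Adj w y ∨ G.Adj w a ∨ G.Adj w b) :
    w ∈ [z, a', b'] := by
  by_contra hmem
  have hnodup : [w, z, a', b'].Nodup := by
    have := h.right
    have := h.not_adj_right
    have := h.left
    simp only [Touches] at hy hz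
    grind [SimpleGraph.adj_comm]
  have := (h.dominatesCycle_insert (K := K) hyz hy hz).length_le hG hnodup
    (by simp [hw, h.left.symm, h.right.symm, hyz.symm])
  simp at this

/-- Given a third edge apart from an induced pair of edges, neither of the three has further
neighbours, and an edge at a seventh vertex would be a fourth. -/
theorem IsInducedMatching.touches_or_touches [Fintype β] (h : IsInducedMatching G a a' b b')
    (hG : HasAlmostMaximalIndex K G 1) (hiso : ∀ v, ∃ w, G.Adj v w) (hcard : 7 ≤ Fintype.card β)
    (hyz : G.Adj y z) : Touches G a a' b b' y ∨ Touches G a a' b b' z := by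
  by_contra! hnot
  obtain ⟨hy, hz⟩ := hnot
  have hclosed : ∀ u ∈ [y, z, a, a', b, b'], ∀ w, G.Adj w u → w ∈ [y, z, a, a', b, b'] := by
    intro u hu w hwu
    have hfront := h.eq_of_adj_of_not_touches (w := w) hG hyz hy hz
    have hback := h.flip.symm.flip.symm.eq_of_adj_of_not_touches (w := w) hG hyz.symm
      (by simp only [Touches] at hz ⊢; tauto) (by simp only [Touches] at hy ⊢; tauto)
    grind
  obtain ⟨v, hv⟩ := Finset.exists_mem_notMem_of_card_lt_card
    (([y, z, a, a', b, b'].toFinset_card_le.trans_lt hcard).trans_eq Finset.card_univ.symm)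
  rw [List.mem_toFinset] at hv
  obtain ⟨x, hvx⟩ := hiso v
  have hx : x ∉ [y, z, a, a', b, b'] := fun hx => hv.2 (hclosed x hx v hvx)
  have hv_adj : ∀ u ∈ [y, z, a, a', b, b'], ¬G.Adj v u := fun u hu hvu => hv.2 (hclosed u hu v hvu)
  have hx_adj : ∀ u ∈ [y, z, a, a', b, b'], ¬G.Adj x u := fun u hu hxu => hx (hclosed u hu x hxu)
  have hnodup : [x, z, a', b'].Nodup := by
    have := h.flip.symm.flip.ne
    have := h.left
    have := h.right
    clear hiso hclosed hv_adj hx_adj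
    simp only [Touches] at hy hz
    grind [SimpleGraph.adj_comm]
  have := ((h.dominatesCycle_insert (K := K) hyz hy hz).suspend hvx (by simpa using hv_adj)
    (by simpa using hx_adj)).length_le hG hnodup
    (by simp [hvx.symm, h.left.symm, h.right.symm, hyz.symm])
  simp at this

theorem IsInducedMatching.false_of_adj_of_adj [Fintype β] (h : IsInducedMatching G a a' b b')
    (hG : HasAlmostMaximalIndex K G 1) (hiso : ∀ v, ∃ w, G.Adj v w) (hcard : 7 ≤ Fintype.card β)
    (hrs : G.Adj r s) (hr : ¬Touches G a a' b b' r) (hsa : G.Adj s a)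
    (hs : G.Adj s a' ∨ G.Adj s b ∨ G.Adj s b') : False := by
  have hnot : ∀ y, y ∉ [s, a, a', b, b'] → ¬Touches G a a' b b' y := by
    intro y hy hyT
    have h1 := h.eq_of_adj (y := y) (z := s) hG
    have h2 := h.flip.eq_of_adj (y := y) (z := s) hG
    have h3 := h.symm.flip.symm.eq_of_adj (y := y) (z := s) hG
    have h4 := h.flip.symm.flip.symm.eq_of_adj (y := y) (z := s) hG
    simp only [Touches] at hyT hr
    grind [SimpleGraph.adj_comm]
  have hadj : ∀ y, y ∉ [s, a, a', b, b'] → G.Adj s y := by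
    intro y hy
    obtain ⟨z, hyz⟩ := hiso y
    have hzT := (h.touches_or_touches hG hiso hcard hyz).resolve_left (hnot y hy)
    have hz : z ∈ [s, a, a', b, b'] := by
      by_contra hz
      exact hnot z hz hzT
    have := hnot y hy
    simp only [Touches] at this
    grind [SimpleGraph.adj_comm]
  obtain ⟨q, hq, hsq⟩ : ∃ q ∈ ({s, a', b, b'} : Finset β), G.Adj s q := by simpa using hs
  have hneighbors : ∀ w ∈ (({s, a', b, b'} : Finset β).erase q)ᶜ, G.Adj s w := by
    intro w hw
    by_cases hwq : w = q
    · exact hwq ▸ hsq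
    by_cases hwa : w = a
    · exact hwa ▸ hsa
    · refine hadj w ?_
      simp only [Finset.mem_compl, Finset.mem_erase, Finset.mem_insert, Finset.mem_singleton,
        List.mem_cons, List.not_mem_nil, or_false] at hw ⊢
      tauto
  have hdeg := hG.card_le_of_forall_adj hneighbors
  have hfour : ({s, a', b, b'} : Finset β).card ≤ 4 := Finset.card_le_four
  rw [Finset.card_compl, Finset.card_erase_of_mem hq] at hdeg
  omega

theorem dominatesCycle_of_pentagon (hrs : G.Adj r s) (hsa : G.Adj s a) (haa' : G.Adj a a')
    (ha'y : G.Adj a' y) (hyr : G.Adj y r) (hra : ¬G.Adj r a) (hra' : ¬G.Adj r a')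
    (hsa' : ¬G.Adj s a') (hsy : ¬G.Adj s y) (hya : ¬G.Adj y a) :
    DominatesCycle K G {a, r} {a, r, a', s, y} := by
  let c : ℕ → β
    | 1 => r
    | 2 => a'
    | 3 => s
    | 4 => y
    | _ => a
  refine dominatesCycle_of_closed_walk (c := c) (m := 5) (fun i hi => ?_) rfl (fun i hi => ?_)
    (by omega) (fun h : a = r => ?_) (fun i hi hi0 heq => ?_) fun w hw _ _ => ?_
  · interval_cases i <;> simp [c]
  · interval_cases i <;> simp only [c] <;> grind [SimpleGraph.adj_comm]
  · grind [SimpleGraph.adj_comm]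
  · have hi_mem : c i ∈ ({a, r} : Finset β) := heq ▸ Finset.mem_insert_self _ _
    have hsucc_mem : c (i + 1) ∈ ({a, r} : Finset β) := heq ▸ by simp
    interval_cases i <;> simp only [c] at hi_mem hsucc_mem <;> grind [SimpleGraph.adj_comm]
  · simp only [c]
    grind [SimpleGraph.adj_comm]

theorem IsInducedMatching.not_touches_path (h : IsInducedMatching G a a' b b')
    (hG : HasAlmostMaximalIndex K G 1) (hrs : G.Adj r s) (hr : ¬Touches G a a' b b' r)
    (hsa : G.Adj s a) (hs : ¬(G.Adj s a' ∨ G.Adj s b ∨ G.Adj s b'))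
    (hy : y ∉ [a, a', b, b', r, s]) : ¬Touches G s a b b' y := by
  intro hyT
  simp only [Touches, not_or] at hyT hr hs
  have hrb : IsInducedMatching G s r b b' :=
    ⟨hrs.symm, h.right, hs.2.1, hs.2.2, hr.2.2.1, hr.2.2.2⟩
  have ha := h.eq_of_adj (y := y) (z := s) hG
  have ha' := h.symm.flip.symm.eq_of_adj (y := y) (z := s) hG
  have hs' := hrb.eq_of_adj (y := y) (z := a) hG
  have := h.left
  have := h.right
  grind [SimpleGraph.adj_comm]

theorem IsInducedMatching.adj_and_adj_of_notMem [Fintype β] (h : IsInducedMatching G a a' b b')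
    (hG : HasAlmostMaximalIndex K G 1) (hiso : ∀ v, ∃ w, G.Adj v w) (hcard : 7 ≤ Fintype.card β)
    (hrs : G.Adj r s) (hr : ¬Touches G a a' b b' r) (hsa : G.Adj s a)
    (hs : ¬(G.Adj s a' ∨ G.Adj s b ∨ G.Adj s b')) (hy : y ∉ [a, a', b, b', r, s]) :
    G.Adj y r ∧ G.Adj y a' := by
  have hnot := fun v => h.not_touches_path hG hrs hr hsa hs (y := v)
  have hyT := hnot y hy
  have hneighbor : ∀ v, G.Adj y v → v = r ∨ v = a' := by
    intro v hyv
    by_contra! hv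
    have hsa_matching : IsInducedMatching G s a b b' :=
      ⟨hsa, h.right, fun hsb => hs (.inr (.inl hsb)), fun hsb => hs (.inr (.inr hsb)), h.not_adj,
        h.not_adj_right⟩
    have hvmem : v ∉ [a, a', b, b', r, s] := by
      simp only [Touches] at hyT
      grind
    exact (hsa_matching.touches_or_touches hG hiso hcard hyv).elim hyT (hnot v hvmem)
  have hiff : G.Adj y r ↔ G.Adj y a' := by
    have := h.not_adj_left
    have := h.not_adj_both
    simp only [Touches, not_or] at hyT hr hs
    have hrb : IsInducedMatching G s r b b' :=
      ⟨hrs.symm, h.right, hs.2.1, hs.2.2, hr.2.2.1, hr.2.2.2⟩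
    have hyr := fun hyr : G.Adj y r => h.touches_or_touches hG hiso hcard hyr
    have hya' := fun hya' : G.Adj y a' => hrb.touches_or_touches hG hiso hcard hya'
    simp only [Touches] at hyr hya'
    grind [SimpleGraph.adj_comm]
  obtain ⟨v, hyv⟩ := hiso y
  rcases hneighbor v hyv with rfl | rfl
  · exact ⟨hyv, hiff.1 hyv⟩
  · exact ⟨hiff.2 hyv, hyv⟩

/-- Here `r, s, a, a'` is an induced path and `bb'` an isolated edge. Any further vertex `y` has to
be joined to both ends of the path, and `bb'` together with the resulting pentagon has too many
neighbours. -/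
theorem IsInducedMatching.false_of_adj_of_not_adj [Fintype β] (h : IsInducedMatching G a a' b b')
    (hG : HasAlmostMaximalIndex K G 1) (hiso : ∀ v, ∃ w, G.Adj v w) (hcard : 7 ≤ Fintype.card β)
    (hrs : G.Adj r s) (hr : ¬Touches G a a' b b' r) (hsa : G.Adj s a)
    (hs : ¬(G.Adj s a' ∨ G.Adj s b ∨ G.Adj s b')) : False := by
  obtain ⟨y, hy⟩ := Finset.exists_mem_notMem_of_card_lt_card
    (([a, a', b, b', r, s].toFinset_card_le.trans_lt hcard).trans_eq Finset.card_univ.symm)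
  rw [List.mem_toFinset] at hy
  obtain ⟨hyr, hya'⟩ := h.adj_and_adj_of_notMem hG hiso hcard hrs hr hsa hs hy.2
  have hyT := h.not_touches_path hG hrs hr hsa hs hy.2
  simp only [Touches, not_or] at hyT hr hs
  have hpentagon : DominatesCycle K G {a, r} {a, r, a', s, y} :=
    dominatesCycle_of_pentagon hrs hsa h.left hya'.symm hyr hr.1 hr.2.1 hs.1
      (fun hsy => hyT.1 hsy.symm) hyT.2.1
  have hnodup : [s, a', y, b'].Nodup := by
    have := h.right
    have := h.symm.flip.symm.ne
    grind [SimpleGraph.adj_comm]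
  have hb : ∀ w ∈ ({a, r, a', s, y} : Finset β), ¬G.Adj b w := by
    simp [G.adj_comm b, h.not_adj, h.not_adj_left, hr, hs, hyT]
  have hb' : ∀ w ∈ ({a, r, a', s, y} : Finset β), ¬G.Adj b' w := by
    simp [G.adj_comm b', h.not_adj_right, h.not_adj_both, hr, hs, hyT]
  have := (hpentagon.suspend h.right hb hb').length_le hG hnodup
    (by simp [hsa, hyr, h.right.symm, h.left.symm])
  simp at this

theorem IsInducedMatching.false_of_not_touches [Fintype β] (h : IsInducedMatching G a a' b b')
    (hG : HasAlmostMaximalIndex K G 1) (hiso : ∀ v, ∃ w, G.Adj v w) (hcard : 7 ≤ Fintype.card β)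
    (hr : ¬Touches G a a' b b' r) : False := by
  obtain ⟨s, hrs⟩ := hiso r
  have hfalse : ∀ {a a' b b' : β}, IsInducedMatching G a a' b b' → ¬Touches G a a' b b' r →
      ¬G.Adj s a := by
    intro a a' b b' h hr hsa
    by_cases hs : G.Adj s a' ∨ G.Adj s b ∨ G.Adj s b'
    · exact h.false_of_adj_of_adj hG hiso hcard hrs hr hsa hs
    · exact h.false_of_adj_of_not_adj hG hiso hcard hrs hr hsa hs
  rcases (h.touches_or_touches hG hiso hcard hrs).resolve_left hr with hs | hs | hs | hs
  · exact hfalse h hr hs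
  · exact hfalse h.flip (by simp only [Touches] at hr ⊢; tauto) hs
  · exact hfalse h.symm (by simp only [Touches] at hr ⊢; tauto) hs
  · exact hfalse h.symm.flip (by simp only [Touches] at hr ⊢; tauto) hs

theorem HasAlmostMaximalIndex.card_le_six [Fintype β] (hG : HasAlmostMaximalIndex K G 1)
    (hiso : ∀ v, ∃ w, G.Adj v w) : Fintype.card β ≤ 6 := by
  by_contra! hcard
  obtain ⟨-, c, hc⟩ := hG.exists_isInducedCycle
  have hnadj : ∀ i < 4, ¬G.Adj (c i) (c (i + 1)) := fun i hi =>
    ((G.compl_adj _ _).1 (hc.adj_succ (by omega) hi)).2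
  have h : IsInducedMatching G (c 0) (c 2) (c 1) (c 3) :=
    ⟨hc.adj_of_lt (by omega) (by omega) (by omega), hc.adj_of_lt (by omega) (by omega) (by omega),
      hnadj 0 (by omega), fun h => hnadj 3 (by omega) (hc.closed.symm ▸ h.symm),
      fun h => hnadj 1 (by omega) h.symm, hnadj 2 (by omega)⟩
  generalize c 0 = a, c 2 = a', c 1 = b, c 3 = b' at h
  have htouches : ∀ v, Touches G a a' b b' v := fun v => by
    by_contra hv
    exact h.false_of_not_touches hG hiso hcard hv
  classical
  set R := ({a, a', b, b'} : Finset β)ᶜ with hR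
  have hmem : ∀ v ∈ R, v ≠ a ∧ v ≠ a' ∧ v ≠ b ∧ v ≠ b' := fun v hv => by simpa [hR] using hv
  have hfront : {v ∈ R | G.Adj v a ∨ G.Adj v b}.card ≤ 1 := by
    simp only [Finset.card_le_one, Finset.mem_filter]
    exact fun v hv w hw => h.eq_of_adj hG (by simp [hmem v hv.1]) (by simp [hmem w hw.1]) hv.2 hw.2
  have hback : {v ∈ R | G.Adj v a' ∨ G.Adj v b'}.card ≤ 1 := by
    simp only [Finset.card_le_one, Finset.mem_filter]
    exact fun v hv w hw => h.flip.symm.flip.symm.eq_of_adj hG (by simp [hmem v hv.1])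
      (by simp [hmem w hw.1]) hv.2 hw.2
  have hcover : R ⊆ {v ∈ R | G.Adj v a ∨ G.Adj v b} ∪ {v ∈ R | G.Adj v a' ∨ G.Adj v b'} := by
    intro v hv
    have := htouches v
    simp only [Touches] at this
    simp only [Finset.mem_union, Finset.mem_filter]
    tauto
  have hRcard := (Finset.card_le_card hcover).trans (Finset.card_union_le _ _)
  have hfour : ({a, a', b, b'} : Finset β).card ≤ 4 := Finset.card_le_four
  rw [Finset.card_compl] at hRcard
  omega

end IndexOne

section GreenLazarsfeldIndex

variable {K : Type} [Field K] {n t : ℕ} {G : SimpleGraph (Fin n)}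

theorem bddAbove_gBetti : BddAbove {i | ∃ j, gBetti K G i j ≠ 0} := by
  refine ⟨n, ?_⟩
  rintro i ⟨j, h⟩
  obtain ⟨W, -, h⟩ := gBetti_ne_zero_iff.1 h
  simpa using (Nat.le_succ i).trans (h.le_card.trans W.card_le_univ)

theorem HasTor.le_gPd {W : Finset (Fin n)} {i : ℕ} (h : HasTor K (indepComplex G) W (i + 1)) :
    i ≤ gPd K G :=
  le_csSup bddAbove_gBetti ⟨W.card, gBetti_ne_zero_iff.2 ⟨W, rfl, h⟩⟩

theorem HasTor.gIndex_le {W : Finset (Fin n)} {i : ℕ} (h : HasTor K (indepComplex G) W (i + 1))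
    (hW : i + 2 < W.card) : gIndex K G ≤ i :=
  sInf_le ⟨i, W.card, rfl, hW, gBetti_ne_zero_iff.2 ⟨W, rfl, h⟩⟩

theorem exists_hasTor_of_gPd_eq (h : gPd K G = t + 1) :
    ∃ W, HasTor K (indepComplex G) W (t + 2) := by
  have hne : {i | ∃ j, gBetti K G i j ≠ 0}.Nonempty := by
    by_contra hempty
    rw [gPd, Set.not_nonempty_iff_eq_empty.1 hempty, csSup_empty] at h
    exact (Nat.succ_ne_zero t) h.symm
  obtain ⟨j, hj⟩ := Nat.sSup_mem hne bddAbove_gBetti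
  rw [← gPd, h] at hj
  obtain ⟨W, -, hW⟩ := gBetti_ne_zero_iff.1 hj
  exact ⟨W, hW⟩

theorem exists_hasTor_of_gIndex_eq (h : gIndex K G = t) :
    ∃ W, HasTor K (indepComplex G) W (t + 1) ∧ t + 3 ≤ W.card := by
  have hne : {N : ℕ∞ | ∃ i j : ℕ, N = i ∧ i + 2 < j ∧ gBetti K G i j ≠ 0}.Nonempty := by
    by_contra hempty
    rw [gIndex, Set.not_nonempty_iff_eq_empty.1 hempty, sInf_empty] at h
    exact ENat.natCast_ne_top t h.symm
  obtain ⟨i, j, hi, hij, hbetti⟩ := csInf_mem hne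
  obtain rfl : t = i := Nat.cast_inj.1 (h.symm.trans hi)
  obtain ⟨W, rfl, hW⟩ := gBetti_ne_zero_iff.1 hbetti
  exact ⟨W, hW, hij⟩

theorem hasAlmostMaximalIndex_of_gIndex_eq (hidx : gIndex K G = t) (hpd : gPd K G = t + 1) :
    HasAlmostMaximalIndex K G t where
  le_add_two
    | _, 0, _ => Nat.zero_le _
    | _, _ + 1, h => Nat.succ_le_succ (h.le_gPd.trans hpd.le)
  lt_of_nonlinear
    | _, 0, h, hW => absurd rfl
        (h.ne_zero (isLowerSet_indepComplex G) (Finset.card_pos.1 (Nat.zero_lt_of_lt hW)))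
    | _, _ + 1, h, hW => Nat.lt_succ_of_le (Nat.cast_le.1 (hidx.symm.le.trans (h.gIndex_le hW)))
  exists_nonlinear := exists_hasTor_of_gIndex_eq hidx
  exists_add_two := exists_hasTor_of_gPd_eq hpd

end GreenLazarsfeldIndex

end EP

/-- If `G` has no isolated vertex and `I(G)` has almost maximal finite
index `t` (that is, `index(I(G)) = t` and `pd(I(G)) = t + 1`), then `G` has `t + 4` or
`t + 5` vertices. -/
theorem statement9 (K : Type) [Field K] (n t : ℕ) (G : SimpleGraph (Fin n))
    (hiso : ∀ v : Fin n, ∃ w, G.Adj v w)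
    (hidx : EP.gIndex K G = (t : ℕ∞)) (hpd : EP.gPd K G = t + 1) :
    n = t + 4 ∨ n = t + 5 := by
  have hG := EP.hasAlmostMaximalIndex_of_gIndex_eq hidx hpd
  obtain ⟨ht, -⟩ := hG.exists_isInducedCycle
  have hlower := hG.add_four_le_card
  have hupper : Fintype.card (Fin n) ≤ t + 5 := by
    obtain rfl | ht := ht.eq_or_lt
    · exact hG.card_le_six hiso
    · exact hG.card_le_add_five ht hiso
  rw [Fintype.card_fin] at hlower hupper
  omega
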